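/- arXiv:2207.12490 — 5 statements merged into one kernel-verified Lean document; each statement's English description precedes it below -/
import Mathlib

section
/- Let F be an algebraically closed field of characteristic different from 2. Then every nonzero polynomial h ∈ F[z] admits a totally odd part-square decomposition: there exist q, ρ ∈ F[z] with h = q² + ρ, deg q ≤ ⌈deg(h)/2⌉, and the coefficient of z^i in ρ equal to 0 for every even natural number i. -/
open Polynomial

theorem aux_decomp {F : Type*} [Field F] [IsAlgClosed F] (n : ℕ) :
    ∀ H : F[X], H.natDegree ≤ n → ∃ a b : F[X], H = a ^ 2 + X * b ^ 2 ∧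
      (∀ i, n < 2 * i → a.coeff i = 0) ∧ (∀ i, n < 2 * i + 1 → b.coeff i = 0) := by
  have hconst : ∀ (n : ℕ) (H : F[X]), H.natDegree = 0 → ∃ a b : F[X], H = a ^ 2 + X * b ^ 2 ∧
      (∀ i, n < 2 * i → a.coeff i = 0) ∧ (∀ i, n < 2 * i + 1 → b.coeff i = 0) := by
    intro n H hH
    obtain ⟨s, hs⟩ := IsAlgClosed.exists_pow_nat_eq (H.coeff 0) (n := 2) (by norm_num)
    refine ⟨C s, 0, ?_, ?_, by simp⟩
    · rw [← C_pow, hs]; simpa using eq_C_of_natDegree_eq_zero hH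
    · intro i hi
      rw [coeff_C, if_neg (by omega)]
  induction n with
  | zero => exact fun H hH => hconst 0 H (by omega)
  | succ n ih =>
    intro H hH
    by_cases h0 : H.natDegree = 0
    · exact hconst _ H h0
    obtain ⟨r, hr⟩ := IsAlgClosed.exists_root H (by
      intro h; exact h0 (natDegree_eq_of_degree_eq_some h))
    obtain ⟨G, rfl⟩ := dvd_iff_isRoot.mpr hr
    have hG0 : G ≠ 0 := by rintro rfl; simp at h0
    rw [natDegree_mul (X_sub_C_ne_zero r) hG0, natDegree_X_sub_C] at hH
    obtain ⟨a, b, hab, ha, hb⟩ := ih G (by omega)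
    obtain ⟨s, hs⟩ := IsAlgClosed.exists_pow_nat_eq (-r) (n := 2) (by norm_num)
    have hr' : r = -s ^ 2 := by rw [hs]; ring
    refine ⟨C s * a - X * b, a + C s * b, ?_, ?_, ?_⟩
    · rw [hab, hr']; simp only [C_neg, C_pow]; ring
    · intro i hi
      cases i with
      | zero => omega
      | succ j => simp [coeff_X_mul, ha (j+1) (by omega), hb j (by omega)]
    · intro i hi
      simp [ha i (by omega), hb i (by omega)]

/-- Let `F` be an algebraically closed field of characteristic different
from `2`.  Then every nonzero polynomial `h ∈ F[z]` admits a *totally odd part-square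
decomposition*: there exist `q, ρ ∈ F[z]` with `h = q² + ρ`, `deg q ≤ ⌈deg h / 2⌉`
(encoded as `2 * deg q ≤ deg h + 1`), and the coefficient of `z^i` in `ρ` equal to `0`
for every even natural number `i`. -/
theorem stmt0 (F : Type*) [Field F] [IsAlgClosed F] (hchar : (2 : F) ≠ 0)
    (h : F[X]) (hh : h ≠ 0) :
    ∃ q ρ : F[X], h = q ^ 2 + ρ ∧ 2 * q.natDegree ≤ h.natDegree + 1 ∧
      ∀ i : ℕ, Even i → ρ.coeff i = 0 := by
  have hdeg : (contract 2 h).natDegree ≤ h.natDegree / 2 := by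
    rw [natDegree_le_iff_coeff_eq_zero]
    intro i hi
    rw [coeff_contract (by norm_num)]
    exact coeff_eq_zero_of_natDegree_lt (by omega)
  obtain ⟨a, b, hab, ha, hb⟩ := aux_decomp _ _ hdeg
  refine ⟨expand F 2 a + X * expand F 2 b, h - (expand F 2 a + X * expand F 2 b) ^ 2,
    by ring, ?_, ?_⟩
  · have : (expand F 2 a + X * expand F 2 b).natDegree ≤ h.natDegree / 2 := by
      rw [natDegree_le_iff_coeff_eq_zero]
      intro i hi
      cases i with
      | zero => omega
      | succ j =>
        rw [coeff_add, coeff_X_mul, coeff_expand (by norm_num), coeff_expand (by norm_num)]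
        split_ifs with h1 h2 h2
        · omega
        · rw [ha _ (by omega), add_zero]
        · rw [hb _ (by omega), add_zero]
        · simp
    omega
  · intro i hi
    have e : (expand F 2 a + X * expand F 2 b) ^ 2
        = expand F 2 (contract 2 h) + X * expand F 2 (2 * (a * b)) := by
      rw [hab]; simp only [map_add, map_mul, map_pow, expand_X, map_ofNat]; ring
    obtain ⟨k, rfl⟩ := hi.two_dvd
    rw [e, coeff_sub, coeff_add, mul_comm 2 k, coeff_expand_mul (by norm_num),
      coeff_contract (by norm_num)]
    cases k with
    | zero => simp
    | succ j =>
      rw [show (j+1)*2 = (2*j+1)+1 by ring, coeff_X_mul, coeff_expand (by norm_num),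
        if_neg (by omega)]
      simp
end

section
/- Let h ∈ K̄[z] be nonzero and let h = q² + ρ be a part-square decomposition with v(ρ) − v(h) < 2v(2) (in particular ρ ≠ 0). Then there exists a part-square decomposition h = q̃² + ρ̃ with v(ρ̃) > v(ρ) if and only if a normalized reduction of ρ is the square of a polynomial in k[z]. Consequently, the decomposition h = q² + ρ is good if and only if no normalized reduction of ρ is a square in k[z]. -/
open Polynomial

/-- The *Gauss valuation* of a polynomial: the minimum of the valuations of its
coefficients (with value `⊤ = +∞` for the zero polynomial). -/
noncomputable def gaussVal {Kbar : Type*} [Field Kbar]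
    (v : AddValuation Kbar (WithTop ℚ)) (h : Kbar[X]) : WithTop ℚ :=
  h.support.inf fun i => v (h.coeff i)

/-- `h = q² + ρ` is a *part-square decomposition* of `h`:
`deg q ≤ ⌈deg h / 2⌉`, encoded as `2 * deg q ≤ deg h + 1` (`q = 0` is allowed). -/
def IsPSD {Kbar : Type*} [Field Kbar] (h q ρ : Kbar[X]) : Prop :=
  h = q ^ 2 + ρ ∧ 2 * q.natDegree ≤ h.natDegree + 1

/-- A part-square decomposition `h = q² + ρ` is *good* if either `v ρ − v h ≥ 2 v 2`,
or `v ρ − v h < 2 v 2` and no part-square decomposition of `h` has strictly larger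
Gauss valuation of its remainder. -/
def IsGoodPSD {Kbar : Type*} [Field Kbar] (v : AddValuation Kbar (WithTop ℚ))
    (h q ρ : Kbar[X]) : Prop :=
  IsPSD h q ρ ∧
    (gaussVal v h + (v 2 + v 2) ≤ gaussVal v ρ ∨
      (gaussVal v ρ < gaussVal v h + (v 2 + v 2) ∧
        ∀ q' ρ' : Kbar[X], IsPSD h q' ρ' → gaussVal v ρ' ≤ gaussVal v ρ))

/-- The residue field of `v` is algebraically closed, encoded via integral lifts:
every monic polynomial of positive degree with integral coefficients has an integral
root modulo the maximal ideal. -/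
def ResidueAlgClosed {Kbar : Type*} [Field Kbar]
    (v : AddValuation Kbar (WithTop ℚ)) : Prop :=
  ∀ p : Kbar[X], p.Monic → 0 < p.natDegree → (∀ i, 0 ≤ v (p.coeff i)) →
    ∃ x : Kbar, 0 ≤ v x ∧ 0 < v (p.eval x)

section helpers

variable {F : Type*} [Field F] (v : AddValuation F (WithTop ℚ))

lemma gv_le (p : F[X]) (i : ℕ) : gaussVal v p ≤ v (p.coeff i) := by
  by_cases hi : i ∈ p.support
  · exact Finset.inf_le (f := fun i => v (p.coeff i)) hi
  · rw [notMem_support_iff.mp hi, AddValuation.map_zero]; exact le_top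

lemma le_gv {p : F[X]} {t : WithTop ℚ} (h : ∀ i, t ≤ v (p.coeff i)) : t ≤ gaussVal v p :=
  Finset.le_inf fun i _ => h i

lemma lt_gv {p : F[X]} {t : WithTop ℚ} (ht : t < ⊤) (h : ∀ i, t < v (p.coeff i)) :
    t < gaussVal v p :=
  (Finset.lt_inf_iff ht).2 fun i _ => h i

lemma gv_attained {p : F[X]} (hp : p ≠ 0) : ∃ i, v (p.coeff i) = gaussVal v p := by
  obtain ⟨i, _, hi⟩ := Finset.exists_mem_eq_inf p.support
    (nonempty_support_iff.2 hp) (fun i => v (p.coeff i))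
  exact ⟨i, hi.symm⟩

lemma gv_zero : gaussVal v (0 : F[X]) = ⊤ := by simp [gaussVal]

lemma gv_ne_top {p : F[X]} (hp : p ≠ 0) : gaussVal v p ≠ ⊤ := by
  have hi := leadingCoeff_ne_zero.2 hp
  intro h
  have := gv_le v p p.natDegree
  rw [h, top_le_iff, AddValuation.top_iff] at this
  exact hi this

lemma gv_add (p q : F[X]) : min (gaussVal v p) (gaussVal v q) ≤ gaussVal v (p + q) :=
  le_gv v fun i => by
    rw [coeff_add]
    exact (min_le_min (gv_le v p i) (gv_le v q i)).trans (v.map_add _ _)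

lemma gv_neg (p : F[X]) : gaussVal v (-p) = gaussVal v p := by
  simp [gaussVal, AddValuation.map_neg]

lemma gv_sub (p q : F[X]) : min (gaussVal v p) (gaussVal v q) ≤ gaussVal v (p - q) := by
  rw [sub_eq_add_neg, ← gv_neg v q]; exact gv_add v _ _

lemma gv_mul (p q : F[X]) : gaussVal v p + gaussVal v q ≤ gaussVal v (p * q) :=
  le_gv v fun i => by
    rw [coeff_mul]
    refine AddValuation.map_le_sum v fun x _ => ?_
    rw [v.map_mul]
    exact add_le_add (gv_le v p _) (gv_le v q _)

lemma gv_C (c : F) : gaussVal v (C c) = v c := by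
  apply le_antisymm
  · simpa using gv_le v (C c) 0
  · refine le_gv v fun i => ?_
    rw [coeff_C]; split_ifs <;> simp

lemma gv_sq (p : F[X]) : gaussVal v (p ^ 2) = gaussVal v p + gaussVal v p := by
  classical
  rw [pow_two]
  refine le_antisymm ?_ (gv_mul v p p)
  by_cases hp : p = 0
  · simp [hp, gv_zero]
  have hex := gv_attained v hp
  have hfin := gv_ne_top v hp
  set i := Nat.find hex with hi
  have h1 : v (p.coeff i) = gaussVal v p := Nat.find_spec hex
  have h2 : ∀ j < i, gaussVal v p < v (p.coeff j) := fun j hj =>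
    lt_of_le_of_ne (gv_le v p j) (Ne.symm (Nat.find_min hex hj))
  have hlt2 : ∀ {a b : WithTop ℚ}, gaussVal v p < a → gaussVal v p ≤ b →
      gaussVal v p + gaussVal v p < a + b := by
    intro a b ha hb
    exact WithTop.add_lt_add_of_lt_of_le hfin ha hb
  refine (gv_le v (p * p) (i + i)).trans (le_of_eq ?_)
  rw [coeff_mul, ← Finset.add_sum_erase _ _
    (show (i, i) ∈ Finset.HasAntidiagonal.antidiagonal (i + i) by simp)]
  have hv : v (p.coeff i * p.coeff i) = gaussVal v p + gaussVal v p := by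
    rw [v.map_mul, h1]
  rw [AddValuation.map_add_eq_of_lt_left, hv]
  rw [hv]
  refine AddValuation.map_lt_sum v (by simpa using hfin) fun x hx => ?_
  rw [Finset.mem_erase, Finset.HasAntidiagonal.mem_antidiagonal] at hx
  obtain ⟨hne, hsum⟩ := hx
  rw [v.map_mul]
  rcases lt_trichotomy x.1 i with h | h | h
  · exact hlt2 (h2 _ h) (gv_le v p _)
  · exact absurd (Prod.ext h (by simp; omega)) hne
  · rw [add_comm (v _)]
    exact hlt2 (h2 _ (by omega)) (gv_le v p _)

/-- Remove the coefficients of positive valuation. -/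
lemma exists_trunc (s : F[X]) (hs : ∀ i, 0 ≤ v (s.coeff i)) :
    ∃ t : F[X], 0 ≤ gaussVal v t ∧ 0 < gaussVal v (s - t) ∧
      (t ≠ 0 → v t.leadingCoeff = 0) := by
  classical
  let t : F[X] := ∑ i ∈ s.support, if v (s.coeff i) = 0 then monomial i (s.coeff i) else 0
  have hc : ∀ i, t.coeff i = if v (s.coeff i) = 0 then s.coeff i else 0 := by
    intro i
    simp only [t, finsetSum_coeff]
    rw [Finset.sum_eq_single i]
    · split_ifs <;> simp
    · intro j _ hj
      split_ifs <;> simp [coeff_monomial, hj]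
    · intro hi
      rw [notMem_support_iff] at hi
      simp [hi]
  refine ⟨t, ?_, ?_, ?_⟩
  · refine le_gv v fun i => ?_
    rw [hc]; split_ifs with h
    · exact hs i
    · simp
  · refine lt_gv v (WithTop.coe_lt_top 0) fun i => ?_
    rw [coeff_sub, hc]; split_ifs with h
    · simp
    · rw [sub_zero]; exact lt_of_le_of_ne (hs i) (Ne.symm h)
  · intro ht
    have := leadingCoeff_ne_zero.2 ht
    rw [leadingCoeff, hc] at this ⊢
    split_ifs at this ⊢ with h
    · exact h
    · exact absurd rfl this

lemma key {F : Type*} [Field F] [IsAlgClosed F]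
    (v : AddValuation F (WithTop ℚ)) (hchar : (2 : F) ≠ 0)
    (h q ρ : F[X]) (hh : h ≠ 0) (hpsd : IsPSD h q ρ)
    (ht : gaussVal v ρ < gaussVal v h + (v 2 + v 2)) :
    (∃ q' ρ' : F[X], IsPSD h q' ρ' ∧ gaussVal v ρ < gaussVal v ρ') ↔
      ∃ γ : F, v γ = gaussVal v ρ ∧
        ∃ s : F[X], (∀ i, 0 ≤ v (s.coeff i)) ∧
          ∀ i, 0 < v ((C γ⁻¹ * ρ - s ^ 2).coeff i) := by
  have hρ : ρ ≠ 0 := by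
    rintro rfl
    rw [gv_zero] at ht
    exact not_top_lt ht
  have hRfin := gv_ne_top v hρ
  have hHfin := gv_ne_top v hh
  have hTfin : v 2 ≠ ⊤ := fun h => hchar ((AddValuation.top_iff v).1 h)
  obtain ⟨heq, hdeg⟩ := hpsd
  obtain ⟨i₀, hi₀⟩ := gv_attained v hρ
  -- a normalizing scalar gives the claim from `s₀`
  have build : ∀ d r : F[X], ρ = d ^ 2 + r → gaussVal v ρ < gaussVal v r →
      ∃ γ : F, v γ = gaussVal v ρ ∧
        ∃ s : F[X], (∀ i, 0 ≤ v (s.coeff i)) ∧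
          ∀ i, 0 < v ((C γ⁻¹ * ρ - s ^ 2).coeff i) := by
    intro d r hd hr
    obtain ⟨δ, hδ⟩ := IsAlgClosed.exists_pow_nat_eq (ρ.coeff i₀) (n := 2) (by norm_num)
    have hvδ : v δ + v δ = gaussVal v ρ := by
      rw [← hi₀, ← hδ, pow_two, v.map_mul]
    have hδ0 : δ ≠ 0 := by
      rintro rfl
      apply hRfin
      rw [← hvδ]; simp
    have hinv : v δ⁻¹ + v δ = 0 := by
      rw [← v.map_mul, inv_mul_cancel₀ hδ0, v.map_one]
    have hdd : gaussVal v ρ ≤ gaussVal v d + gaussVal v d := by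
      rw [← gv_sq, show d ^ 2 = ρ - r by rw [hd]; ring]
      refine le_trans ?_ (gv_sub v ρ r)
      rw [min_eq_left hr.le]
    refine ⟨ρ.coeff i₀, hi₀, C δ⁻¹ * d, fun i => ?_, fun i => ?_⟩
    · refine le_trans ?_ (gv_le v _ i)
      refine le_trans ?_ (gv_mul v _ _)
      rw [gv_C]
      rw [← hvδ] at hdd
      generalize gaussVal v d = D at *
      generalize v δ = x at *
      generalize v δ⁻¹ = y at *
      cases D <;> cases x <;> cases y <;> norm_cast at * <;> simp at * <;> norm_cast at * <;>
        linarith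
    · refine lt_of_lt_of_le ?_ (gv_le v _ i)
      have : C (ρ.coeff i₀)⁻¹ * ρ - (C δ⁻¹ * d) ^ 2 = C (δ⁻¹ * δ⁻¹) * r := by
        rw [← hδ, hd, mul_pow, ← C_pow, pow_two δ, mul_inv, pow_two δ⁻¹]; ring
      rw [this]
      refine lt_of_lt_of_le ?_ (gv_mul v _ _)
      rw [gv_C, v.map_mul]
      rw [← hvδ] at hr
      generalize gaussVal v r = D at *
      generalize v δ = x at *
      generalize v δ⁻¹ = y at *
      cases D <;> cases x <;> cases y <;> norm_cast at * <;> simp at * <;> norm_cast at * <;>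
        linarith
  rcases lt_or_ge (gaussVal v ρ) (gaussVal v h) with hlt | hge
  · refine ⟨fun _ => ?_, fun _ => ⟨0, h, ⟨by simp, by simp⟩, hlt⟩⟩
    obtain ⟨ι, hι⟩ := IsAlgClosed.exists_pow_nat_eq (-1 : F) (n := 2) (by norm_num)
    refine build (C ι * q) h ?_ hlt
    rw [mul_pow, ← C_pow, hι, heq]; simp
  · have hQ : gaussVal v h ≤ gaussVal v q + gaussVal v q := by
      rw [← gv_sq, show q ^ 2 = h - ρ by rw [heq]; ring]
      refine le_trans ?_ (gv_sub v h ρ)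
      rw [min_eq_left hge]
    constructor
    · rintro ⟨q', ρ', ⟨heq', _⟩, hlt⟩
      have hid : ρ = (q' - q) ^ 2 + (C 2 * q * (q' - q) + ρ') := by
        have : ρ = h - q ^ 2 := by rw [heq]; ring
        rw [this, heq', show (C 2 : F[X]) = 2 from rfl]; ring
      set d := q' - q with hd
      have hcross : v 2 + gaussVal v q + gaussVal v d ≤ gaussVal v (C 2 * q * d) := by
        refine le_trans ?_ (gv_mul v _ _)
        gcongr
        refine le_trans ?_ (gv_mul v _ _)
        rw [gv_C]
      have hd2 : min (gaussVal v ρ) (v 2 + gaussVal v q + gaussVal v d)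
          ≤ gaussVal v d + gaussVal v d := by
        have e : d ^ 2 = (ρ - ρ') - C 2 * q * d := by
          linear_combination -hid
        rw [← gv_sq, e]
        refine le_trans (min_le_min ?_ hcross) (gv_sub v _ _)
        refine le_trans ?_ (gv_sub v _ _)
        rw [min_eq_left hlt.le]
      refine build d _ hid (lt_of_lt_of_le ?_ (gv_add v _ _))
      refine lt_min (lt_of_lt_of_le ?_ hcross) hlt
      clear hcross hlt
      generalize gaussVal v d = D at *
      generalize gaussVal v q = Q at *
      generalize gaussVal v ρ = R at *
      generalize gaussVal v h = H at *
      generalize v 2 = T at *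
      lift R to ℚ using hRfin
      lift H to ℚ using hHfin
      lift T to ℚ using hTfin
      cases D with
      | top => simp
      | coe D =>
        cases Q with
        | top => simp
        | coe Q =>
          norm_cast at *
          rcases min_le_iff.1 hd2 with h | h <;> linarith
    · rintro ⟨γ, hγ, s, hs, hsr⟩
      obtain ⟨δ, hδ⟩ := IsAlgClosed.exists_pow_nat_eq γ (n := 2) (by norm_num)
      have hvδ : v δ + v δ = gaussVal v ρ := by
        rw [← hγ, ← hδ, pow_two, v.map_mul]
      have hγ0 : γ ≠ 0 := by
        rintro rfl
        apply hRfin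
        rw [← hγ]; simp
      obtain ⟨t, ht0, hst, htl⟩ := exists_trunc v s hs
      have hs0 : 0 ≤ gaussVal v s := le_gv v hs
      have hE : 0 < gaussVal v (C γ⁻¹ * ρ - t ^ 2) := by
        have e : C γ⁻¹ * ρ - t ^ 2 = (C γ⁻¹ * ρ - s ^ 2) + (s - t) * (s + t) := by ring
        rw [e]
        refine lt_of_lt_of_le (lt_min (lt_gv v (WithTop.coe_lt_top 0) hsr) ?_) (gv_add v _ _)
        refine lt_of_lt_of_le ?_ (gv_mul v _ _)
        exact add_pos_of_pos_of_nonneg hst ((le_min hs0 ht0).trans (gv_add v _ _))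
      have hρdeg : ρ.natDegree ≤ h.natDegree + 1 := by
        have : ρ = h - q ^ 2 := by rw [heq]; ring
        rw [this]
        refine (natDegree_sub_le _ _).trans (max_le (Nat.le_succ _) ?_)
        rw [natDegree_pow]; exact hdeg
      have htdeg : 2 * t.natDegree ≤ h.natDegree + 1 := by
        by_cases ht' : t = 0
        · simp [ht']
        refine le_trans ?_ hρdeg
        apply le_natDegree_of_ne_zero
        intro h0
        have h1 := lt_of_lt_of_le hE (gv_le v _ (2 * t.natDegree))
        rw [coeff_sub, coeff_C_mul, h0, coeff_pow_mul_natDegree, mul_zero, zero_sub,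
          AddValuation.map_neg, pow_two, v.map_mul, htl ht'] at h1
        simp at h1
      refine ⟨q + C δ * t, h - (q + C δ * t) ^ 2, ⟨by ring, ?_⟩, ?_⟩
      · have h1 := natDegree_add_le q (C δ * t)
        have h2 := natDegree_C_mul_le δ t
        rcases le_max_iff.1 h1 with h | h <;> omega
      · have e : h - (q + C δ * t) ^ 2
            = C γ * (C γ⁻¹ * ρ - t ^ 2) - C 2 * q * (C δ * t) := by
          have hc : C γ * C γ⁻¹ = (1 : F[X]) := by
            rw [← C_mul, mul_inv_cancel₀ hγ0, C_1]
          have hc2 : (C γ : F[X]) = C δ ^ 2 := by rw [← hδ, C_pow]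
          rw [show (C 2 : F[X]) = 2 from rfl]
          linear_combination heq - ρ * hc + t ^ 2 * hc2
        rw [e]
        refine lt_of_lt_of_le (lt_min ?_ ?_) (gv_sub v _ _)
        · refine lt_of_lt_of_le ?_ (gv_mul v _ _)
          rw [gv_C, hγ]
          generalize gaussVal v (C γ⁻¹ * ρ - t ^ 2) = E at *
          generalize gaussVal v ρ = R at *
          lift R to ℚ using hRfin
          cases E with
          | top => simp
          | coe E => norm_cast at *; linarith
        · have hx : v 2 + gaussVal v q + (v δ + gaussVal v t)
              ≤ gaussVal v (C 2 * q * (C δ * t)) := by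
            refine le_trans ?_ (gv_mul v _ _)
            gcongr
            · refine le_trans ?_ (gv_mul v _ _)
              rw [gv_C]
            · refine le_trans ?_ (gv_mul v _ _)
              rw [gv_C]
          refine lt_of_lt_of_le ?_ hx
          clear hx hE hs0 hst hγ hi₀ build
          generalize gaussVal v t = S at *
          generalize gaussVal v q = Q at *
          generalize gaussVal v ρ = R at *
          generalize gaussVal v h = H at *
          generalize v 2 = T at *
          generalize v δ = x at *
          lift R to ℚ using hRfin
          lift H to ℚ using hHfin
          lift T to ℚ using hTfin
          cases x with
          | top => simp at hvδ
          | coe x =>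
            cases S with
            | top => simp
            | coe S =>
              cases Q with
              | top => simp
              | coe Q =>
                norm_cast at *
                linarith

end helpers

/-- Let `h ∈ K̄[z]` be nonzero with a part-square decomposition
`h = q² + ρ` satisfying `v ρ − v h < 2 v 2`.  Then there is a part-square decomposition
`h = q̃² + ρ̃` with `v ρ̃ > v ρ` iff a normalized reduction of `ρ` is the square of a
polynomial over the residue field (encoded via an integral lift `s`); consequently the
decomposition is good iff no normalized reduction of `ρ` is such a square. -/
theorem stmt1 {Kbar : Type*} [Field Kbar] [IsAlgClosed Kbar]
    (v : AddValuation Kbar (WithTop ℚ)) (hchar : (2 : Kbar) ≠ 0)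
    (hres : ResidueAlgClosed v)
    (h q ρ : Kbar[X]) (hh : h ≠ 0) (hpsd : IsPSD h q ρ)
    (ht : gaussVal v ρ < gaussVal v h + (v 2 + v 2)) :
    ((∃ q' ρ' : Kbar[X], IsPSD h q' ρ' ∧ gaussVal v ρ < gaussVal v ρ') ↔
      ∃ γ : Kbar, v γ = gaussVal v ρ ∧
        ∃ s : Kbar[X], (∀ i, 0 ≤ v (s.coeff i)) ∧
          ∀ i, 0 < v ((C γ⁻¹ * ρ - s ^ 2).coeff i)) ∧
    (IsGoodPSD v h q ρ ↔
      ∀ γ : Kbar, v γ = gaussVal v ρ →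
        ¬∃ s : Kbar[X], (∀ i, 0 ≤ v (s.coeff i)) ∧
          ∀ i, 0 < v ((C γ⁻¹ * ρ - s ^ 2).coeff i)) := by
  have hk := key v hchar h q ρ hh hpsd ht
  refine ⟨hk, ?_⟩
  constructor
  · rintro ⟨_, h1 | ⟨_, h1⟩⟩ γ hγ hs
    · exact absurd ht (not_lt.2 h1)
    · obtain ⟨q', ρ', hp, hl⟩ := hk.2 ⟨γ, hγ, hs⟩
      exact absurd hl (not_lt.2 (h1 q' ρ' hp))
  · intro hn
    refine ⟨hpsd, Or.inr ⟨ht, fun q' ρ' hp => ?_⟩⟩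
    by_contra hl
    obtain ⟨γ, hγ, hs⟩ := hk.1 ⟨q', ρ', hp, not_le.1 hl⟩
    exact hn γ hγ hs
end

section
/- Let h ∈ K̄[z] be nonzero and suppose h = q² + ρ and h = q̃² + ρ̃ are both good part-square decompositions of h, with v(ρ) − v(h) < 2v(2). Then v(ρ̃) = v(ρ), and for any normalized reductions r of ρ and r̃ of ρ̃ in k[z] the following hold: for every odd integer i, the coefficient of z^i in r vanishes if and only if the coefficient of z^i in r̃ vanishes; and there exists c ∈ k× with r′ = c·r̃′ (the derivatives of the normalized reductions agree up to scaling). -/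
open Polynomial

theorem le_gaussVal_iff' {F : Type*} [Field F] (v : AddValuation F (WithTop ℚ)) (p : F[X])
    (a : WithTop ℚ) : a ≤ gaussVal v p ↔ ∀ i, a ≤ v (p.coeff i) := by
  unfold gaussVal
  rw [Finset.le_inf_iff]
  constructor
  · intro H i
    by_cases hi : p.coeff i = 0
    · rw [hi, v.map_zero]; exact le_top
    · exact H i (mem_support_iff.mpr hi)
  · intro H i _
    exact H i

theorem exists_gaussVal_eq {F : Type*} [Field F] (v : AddValuation F (WithTop ℚ)) (p : F[X])
    (hp : p ≠ 0) : ∃ m : ℚ, gaussVal v p = m ∧ ∃ j, v (p.coeff j) = m := by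
  obtain ⟨j, hj, hj'⟩ := Finset.exists_mem_eq_inf p.support
    (Polynomial.nonempty_support_iff.mpr hp) (fun i => v (p.coeff i))
  have hne : v (p.coeff j) ≠ ⊤ := by
    rw [Ne, v.top_iff]; exact mem_support_iff.mp hj
  obtain ⟨m, hm⟩ := WithTop.ne_top_iff_exists.mp hne
  exact ⟨m, by rw [hm]; exact hj', j, hm.symm⟩

theorem val_mul_coeff_ge {F : Type*} [Field F] (v : AddValuation F (WithTop ℚ)) (p q : F[X])
    (a b : ℚ) (hp : ∀ i, (a : WithTop ℚ) ≤ v (p.coeff i))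
    (hq : ∀ i, (b : WithTop ℚ) ≤ v (q.coeff i)) (i : ℕ) :
    ((a + b : ℚ) : WithTop ℚ) ≤ v ((p * q).coeff i) := by
  rw [coeff_mul]
  apply v.map_le_sum
  intro x _
  rw [v.map_mul, WithTop.coe_add]
  exact add_le_add (hp _) (hq _)

theorem exists_val_sq {F : Type*} [Field F] (v : AddValuation F (WithTop ℚ)) (p : F[X])
    (hp : p ≠ 0) : ∃ m : ℚ, (∀ i, (m : WithTop ℚ) ≤ v (p.coeff i)) ∧
      ∃ j, v ((p ^ 2).coeff j) = ((m + m : ℚ) : WithTop ℚ) := by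
  classical
  obtain ⟨m, hm, hex⟩ := exists_gaussVal_eq v p hp
  have hle := (le_gaussVal_iff' v p m).mp hm.ge
  refine ⟨m, hle, Nat.find hex + Nat.find hex, ?_⟩
  set j := Nat.find hex with hjdef
  have hj : v (p.coeff j) = m := Nat.find_spec hex
  have hlt : ∀ i < j, (m : WithTop ℚ) < v (p.coeff i) := fun i hi =>
    lt_of_le_of_ne (hle i) (fun h => Nat.find_min hex hi h.symm)
  have hjj : v (p.coeff j * p.coeff j) = ((m + m : ℚ) : WithTop ℚ) := by
    rw [v.map_mul, hj, WithTop.coe_add]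
  rw [sq, coeff_mul, ← Finset.add_sum_erase _ _
    (show (j, j) ∈ Finset.HasAntidiagonal.antidiagonal (j + j) by simp)]
  have hmem : (m : WithTop ℚ) ≠ ⊤ := WithTop.coe_ne_top
  have hrest : v (p.coeff j * p.coeff j) < v (∑ x ∈ (Finset.HasAntidiagonal.antidiagonal (j + j)).erase (j, j),
      p.coeff x.1 * p.coeff x.2) := by
    rw [hjj]
    apply v.map_lt_sum WithTop.coe_ne_top
    rintro ⟨x, y⟩ hx
    simp only [Finset.mem_erase, Finset.HasAntidiagonal.mem_antidiagonal, ne_eq, Prod.mk.injEq] at hx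
    rw [v.map_mul, WithTop.coe_add]
    rcases lt_or_ge x j with h | h
    · exact WithTop.add_lt_add_of_lt_of_le hmem (hlt _ h) (hle _)
    · have : y < j := by omega
      exact WithTop.add_lt_add_of_le_of_lt hmem (hle _) (hlt _ this)
  rw [v.map_add_eq_of_lt_left hrest, hjj]

theorem val_sq_odd {F : Type*} [Field F] (v : AddValuation F (WithTop ℚ)) (p : F[X])
    (a e : ℚ) (he : v 2 = e) (hp : ∀ i, (a : WithTop ℚ) ≤ v (p.coeff i)) (i : ℕ) (hi : Odd i) :
    ((e + (a + a) : ℚ) : WithTop ℚ) ≤ v ((p ^ 2).coeff i) := by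
  classical
  have hmono : ∀ k n, (a : WithTop ℚ) ≤ v ((monomial k (p.coeff k)).coeff n) := by
    intro k n
    rw [coeff_monomial]
    split_ifs
    · exact hp k
    · rw [v.map_zero]; exact le_top
  have key : ∀ S : Finset ℕ, ((e + (a + a) : ℚ) : WithTop ℚ) ≤
      v (((∑ k ∈ S, monomial k (p.coeff k)) ^ 2).coeff i) := by
    intro S
    induction S using Finset.induction_on with
    | empty => simp
    | insert k S hk ih =>
      rw [Finset.sum_insert hk]
      have e1 : (monomial k (p.coeff k) + ∑ k ∈ S, monomial k (p.coeff k)) ^ 2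
          = monomial k (p.coeff k) ^ 2 + (C 2 * (monomial k (p.coeff k)
            * ∑ k ∈ S, monomial k (p.coeff k)) + (∑ k ∈ S, monomial k (p.coeff k)) ^ 2) := by
        rw [show (C 2 : F[X]) = 2 from rfl]; ring
      rw [e1, coeff_add, coeff_add]
      have h0 : (monomial k (p.coeff k) ^ 2).coeff i = 0 := by
        rw [monomial_pow, coeff_monomial, if_neg]
        rintro rfl
        rcases hi with ⟨t, ht⟩; omega
      rw [h0, zero_add]
      apply v.map_le_add _ ih
      rw [coeff_C_mul, v.map_mul, he, WithTop.coe_add]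
      refine add_le_add le_rfl (val_mul_coeff_ge v _ _ a a (hmono k) ?_ i)
      intro n
      rw [finsetSum_coeff]
      exact v.map_le_sum fun k _ => hmono k n
  have := key p.support
  rwa [← p.as_sum_support] at this

/-- If `h = q² + ρ = q̃² + ρ̃` are two good part-square decompositions
of a nonzero `h` with `v ρ − v h < 2 v 2`, then `v ρ̃ = v ρ`, and for any normalized
reductions (i.e. any choices of scalars `γ, γ'` of the appropriate valuation):
the same odd degrees occur (a coefficient of the reduction vanishes iff the valuation of
the corresponding coefficient of `γ⁻¹ρ` is positive), and the derivatives of the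
normalized reductions agree up to a unit scalar `c`. -/
theorem stmt2 {Kbar : Type*} [Field Kbar] [IsAlgClosed Kbar]
    (v : AddValuation Kbar (WithTop ℚ)) (hchar : (2 : Kbar) ≠ 0)
    (hres : ResidueAlgClosed v)
    (h q ρ q' ρ' : Kbar[X]) (hh : h ≠ 0)
    (hgood : IsGoodPSD v h q ρ) (hgood' : IsGoodPSD v h q' ρ')
    (ht : gaussVal v ρ < gaussVal v h + (v 2 + v 2)) :
    gaussVal v ρ' = gaussVal v ρ ∧
    ∀ γ γ' : Kbar, v γ = gaussVal v ρ → v γ' = gaussVal v ρ' →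
      (∀ i : ℕ, Odd i →
        (0 < v ((C γ⁻¹ * ρ).coeff i) ↔ 0 < v ((C γ'⁻¹ * ρ').coeff i))) ∧
      ∃ c : Kbar, v c = 0 ∧
        ∀ i : ℕ,
          0 < v ((derivative (C γ⁻¹ * ρ) - C c * derivative (C γ'⁻¹ * ρ')).coeff i) := by
  have hmax : ∀ q' ρ' : Kbar[X], IsPSD h q' ρ' → gaussVal v ρ' ≤ gaussVal v ρ := by
    rcases hgood.2 with h1 | h1
    · exact absurd ht (not_lt.mpr h1)
    · exact h1.2
  have hle : gaussVal v ρ' ≤ gaussVal v ρ := hmax _ _ hgood'.1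
  have heq : gaussVal v ρ' = gaussVal v ρ := by
    rcases hgood'.2 with h1 | h1
    · exact absurd (lt_of_lt_of_le ht (h1.trans hle)) (lt_irrefl _)
    · exact le_antisymm hle (h1.2 _ _ hgood.1)
  have hhρ : gaussVal v h ≤ gaussVal v ρ := hmax 0 h ⟨by simp, by simp⟩
  refine ⟨heq, ?_⟩
  obtain ⟨H, hH, -⟩ := exists_gaussVal_eq v h hh
  obtain ⟨T, hT⟩ := WithTop.ne_top_iff_exists.mp (ne_top_of_lt ht)
  obtain ⟨e, he⟩ := WithTop.ne_top_iff_exists.mp (mt v.top_iff.mp hchar)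
  rw [hH, ← hT, ← he] at ht
  rw [hH, ← hT] at hhρ
  have ht1 : T < H + (e + e) := by exact_mod_cast ht
  have hHT : H ≤ T := by exact_mod_cast hhρ
  have he0 : 0 < e := by linarith
  have hhc := (le_gaussVal_iff' v h H).mp hH.ge
  have hρc := (le_gaussVal_iff' v ρ T).mp hT.le
  have hρc' := (le_gaussVal_iff' v ρ' T).mp (hT.trans heq.symm).le
  have hq : ∀ i, ((H / 2 : ℚ) : WithTop ℚ) ≤ v (q.coeff i) := by
    by_cases hq0 : q = 0
    · simp [hq0]
    obtain ⟨m, hm, j, hj⟩ := exists_val_sq v q hq0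
    have h1 : (H : WithTop ℚ) ≤ v ((q ^ 2).coeff j) := by
      rw [show q ^ 2 = h - ρ by rw [hgood.1.1]; ring, coeff_sub]
      exact v.map_le_sub (hhc j) (le_trans (by exact_mod_cast hHT) (hρc j))
    rw [hj] at h1
    have h2 : H ≤ m + m := by exact_mod_cast h1
    intro i
    refine le_trans ?_ (hm i)
    have : H / 2 ≤ m := by linarith
    exact_mod_cast this
  obtain ⟨s, hs⟩ : ∃ s, s = q' - q := ⟨_, rfl⟩
  have hdiff : ρ - ρ' = s ^ 2 + C 2 * (q * s) := by
    have h1 := hgood.1.1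
    have h2 := hgood'.1.1
    rw [hs, show (C 2 : Kbar[X]) = 2 from rfl]
    linear_combination h2 - h1
  have hcross : ∀ (m : ℚ), (∀ i, (m : WithTop ℚ) ≤ v (s.coeff i)) → ∀ i,
      ((e + (H / 2 + m) : ℚ) : WithTop ℚ) ≤ v ((C 2 * (q * s)).coeff i) := by
    intro m hm i
    rw [coeff_C_mul, v.map_mul, ← he, WithTop.coe_add]
    exact add_le_add le_rfl (val_mul_coeff_ge v _ _ _ _ hq hm i)
  have hsc : ∀ i, ((T / 2 : ℚ) : WithTop ℚ) ≤ v (s.coeff i) := by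
    by_cases hs0 : s = 0
    · simp [hs0]
    obtain ⟨m, hm, j, hj⟩ := exists_val_sq v s hs0
    have h3 : T / 2 ≤ m := by
      by_contra hlt
      push Not at hlt
      have h1 : (T : WithTop ℚ) ≤ v ((ρ - ρ').coeff j) := by
        rw [coeff_sub]; exact v.map_le_sub (hρc j) (hρc' j)
      have h2 : v ((s ^ 2).coeff j) < v ((C 2 * (q * s)).coeff j) := by
        rw [hj]
        refine lt_of_lt_of_le ?_ (hcross m hm j)
        have : m + m < e + (H / 2 + m) := by linarith
        exact_mod_cast this
      rw [hdiff, coeff_add, v.map_add_eq_of_lt_left h2, hj] at h1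
      have h4 : T ≤ m + m := by exact_mod_cast h1
      linarith
    intro i
    exact le_trans (by exact_mod_cast h3) (hm i)
  have hodd : ∀ i, Odd i → (T : WithTop ℚ) < v (ρ.coeff i - ρ'.coeff i) := by
    intro i hi
    rw [← coeff_sub, hdiff, coeff_add]
    apply v.map_lt_add
    · refine lt_of_lt_of_le ?_ (val_sq_odd v s _ e he.symm hsc i hi)
      have : T < e + (T / 2 + T / 2) := by linarith
      exact_mod_cast this
    · refine lt_of_lt_of_le ?_ (hcross _ hsc i)
      have : T < e + (H / 2 + T / 2) := by linarith
      exact_mod_cast this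
  intro γ γ' hγ hγ'
  rw [heq] at hγ'
  rw [← hT] at hγ hγ'
  have hne : ∀ g : Kbar, v g = T → g ≠ 0 := by
    rintro g hg rfl
    rw [v.map_zero] at hg
    exact WithTop.coe_ne_top hg.symm
  have hγ0 := hne γ hγ
  have hγ0' := hne γ' hγ'
  have hscale : ∀ g x : Kbar, v g = T → (0 < v (g⁻¹ * x) ↔ (T : WithTop ℚ) < v x) := by
    intro g x hg
    have hx : v x = T + v (g⁻¹ * x) := by
      rw [← hg, ← v.map_mul, mul_inv_cancel_left₀ (hne g hg)]
    rw [hx]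
    constructor
    · intro h0
      simpa using WithTop.add_lt_add_left (WithTop.coe_ne_top (a := T)) h0
    · intro h0
      by_contra hn
      have := add_le_add (le_refl (T : WithTop ℚ)) (not_lt.mp hn)
      rw [add_zero] at this
      exact absurd h0 (not_lt.mpr this)
  constructor
  · intro i hi
    rw [coeff_C_mul, coeff_C_mul, hscale γ _ hγ, hscale γ' _ hγ']
    constructor
    · intro h1
      have h2 := hodd i hi
      rw [v.map_sub_swap] at h2
      have := v.map_lt_add h1 h2
      rwa [add_sub_cancel] at this
    · intro h1
      have := v.map_lt_add h1 (hodd i hi)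
      rwa [add_sub_cancel] at this
  · refine ⟨γ⁻¹ * γ', ?_, ?_⟩
    · have h1 : v γ + v (γ⁻¹ * γ') = v γ' := by
        rw [← v.map_mul, mul_inv_cancel_left₀ hγ0]
      rw [hγ, hγ'] at h1
      have hnt : v (γ⁻¹ * γ') ≠ ⊤ := by
        rw [Ne, v.top_iff]
        exact mul_ne_zero (inv_ne_zero hγ0) hγ0'
      obtain ⟨x, hx⟩ := WithTop.ne_top_iff_exists.mp hnt
      rw [← hx] at h1 ⊢
      have h2 : T + x = T := by exact_mod_cast h1
      have h3 : x = 0 := by linarith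
      rw [h3]; rfl
    · have hnat : ∀ n : ℕ, 0 ≤ v (n : Kbar) := by
        intro n
        induction n with
        | zero => simp
        | succ n ih => rw [Nat.cast_succ]; exact v.map_le_add ih (by rw [v.map_one])
      intro i
      have h1 : (derivative (C γ⁻¹ * ρ) - C (γ⁻¹ * γ') * derivative (C γ'⁻¹ * ρ')).coeff i
          = γ⁻¹ * (((i + 1 : ℕ) : Kbar) * (ρ.coeff (i + 1) - ρ'.coeff (i + 1))) := by
        rw [coeff_sub, coeff_C_mul, coeff_derivative, coeff_derivative, coeff_C_mul, coeff_C_mul]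
        push_cast
        field_simp
      rw [h1, hscale γ _ hγ, v.map_mul]
      rcases Nat.even_or_odd (i + 1) with hev | hod
      · obtain ⟨n, hn⟩ := hev
        have h2 : (e : WithTop ℚ) ≤ v ((i + 1 : ℕ) : Kbar) := by
          rw [hn, ← two_mul, Nat.cast_mul, v.map_mul, Nat.cast_ofNat, ← he]
          simpa using add_le_add (le_refl (e : WithTop ℚ)) (hnat n)
        refine lt_of_lt_of_le ?_ (add_le_add h2 (v.map_le_sub (hρc (i + 1)) (hρc' (i + 1))))
        have : T < e + T := by linarith
        exact_mod_cast this
      · refine lt_of_lt_of_le (hodd _ hod) ?_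
        simpa using add_le_add (hnat (i + 1)) (le_refl (v (ρ.coeff (i + 1) - ρ'.coeff (i + 1))))
end

section
/- Let h₁, h₂ ∈ K̄[z] be nonzero polynomials, at most one of which has odd degree, such that every root of h₁ in K̄ has valuation > 0 and every root of h₂ in K̄ has valuation < 0. Let h_i = q_i² + ρ_i (i = 1, 2) be good part-square decompositions and set t_i := v(ρ_i) − v(h_i). Assume min{t₁, t₂} < 2v(2). Put h := h₁h₂, q := q₁q₂, ρ := h − q² and t := v(ρ) − v(h). Then h = q² + ρ is a part-square decomposition, t = min{t₁, t₂}, and this decomposition of h is good. -/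
open Polynomial

section Helpers

variable {F : Type*} [Field F]

def BB (v : AddValuation F (WithTop ℚ)) (f : F[X]) (a : ℚ) : Prop :=
  ∀ i, (a : WithTop ℚ) ≤ v (f.coeff i)

def SS (v : AddValuation F (WithTop ℚ)) (f : F[X]) (a : ℚ) : Prop :=
  ∀ i, (a : WithTop ℚ) < v (f.coeff i)

variable {v : AddValuation F (WithTop ℚ)}

lemma le_gauss {f : F[X]} {a : ℚ} : (a : WithTop ℚ) ≤ gaussVal v f ↔ BB v f a := by
  unfold gaussVal BB
  rw [Finset.le_inf_iff]
  refine ⟨fun h i => ?_, fun h i _ => h i⟩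
  by_cases hi : f.coeff i = 0
  · simp [hi]
  · exact h i (by simpa using hi)

lemma lt_gauss {f : F[X]} {a : ℚ} : (a : WithTop ℚ) < gaussVal v f ↔ SS v f a := by
  unfold gaussVal SS
  rw [Finset.lt_inf_iff (WithTop.coe_lt_top a)]
  refine ⟨fun h i => ?_, fun h i _ => h i⟩
  by_cases hi : f.coeff i = 0
  · simp [hi, WithTop.coe_lt_top a]
  · exact h i (by simpa using hi)

lemma gauss_eq {f : F[X]} {a : ℚ} :
    gaussVal v f = a ↔ BB v f a ∧ ∃ i, v (f.coeff i) = a := by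
  constructor
  · intro h
    have hB : BB v f a := le_gauss.1 h.ge
    refine ⟨hB, ?_⟩
    by_contra hne
    push Not at hne
    have : SS v f a := fun i => lt_of_le_of_ne (hB i) (hne i).symm
    exact (lt_gauss.2 this).ne' h
  · rintro ⟨hB, i, hi⟩
    refine le_antisymm ?_ (le_gauss.2 hB)
    by_contra hlt
    exact (lt_gauss.1 (not_le.1 hlt) i).ne' hi

lemma v_ne_top {x : F} (hx : x ≠ 0) : ∃ a : ℚ, v x = a := by
  have : v x ≠ ⊤ := by
    intro h
    exact hx ((AddValuation.top_iff v).1 h)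
  exact ⟨(v x).untop this, by simp⟩

lemma gauss_ex {f : F[X]} (hf : f ≠ 0) : ∃ a : ℚ, gaussVal v f = a := by
  have hne : f.support.Nonempty := by simpa using hf
  obtain ⟨i, hi, he⟩ := Finset.exists_mem_eq_inf f.support hne (fun i => v (f.coeff i))
  obtain ⟨a, ha⟩ := v_ne_top (v := v) (x := f.coeff i) (by simpa using hi)
  exact ⟨a, by unfold gaussVal; rw [he, ha]⟩

lemma SS.toBB {f : F[X]} {a : ℚ} (h : SS v f a) : BB v f a := fun i => (h i).le

lemma BB.mono {f : F[X]} {a b : ℚ} (h : BB v f a) (hb : b ≤ a) : BB v f b :=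
  fun i => le_trans (by exact_mod_cast hb) (h i)

lemma BB.toSS {f : F[X]} {a b : ℚ} (h : BB v f a) (hb : b < a) : SS v f b :=
  fun i => lt_of_lt_of_le (by exact_mod_cast hb) (h i)

lemma SS.mono {f : F[X]} {a b : ℚ} (h : SS v f a) (hb : b ≤ a) : SS v f b :=
  fun i => lt_of_le_of_lt (by exact_mod_cast hb) (h i)

lemma BB.add {f g : F[X]} {a : ℚ} (hf : BB v f a) (hg : BB v g a) : BB v (f + g) a :=
  fun i => by rw [coeff_add]; exact v.map_le_add (hf i) (hg i)

lemma SS.add {f g : F[X]} {a : ℚ} (hf : SS v f a) (hg : SS v g a) : SS v (f + g) a :=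
  fun i => by rw [coeff_add]; exact v.map_lt_add (hf i) (hg i)

lemma BB.neg {f : F[X]} {a : ℚ} (hf : BB v f a) : BB v (-f) a :=
  fun i => by rw [coeff_neg, v.map_neg]; exact hf i

lemma SS.neg {f : F[X]} {a : ℚ} (hf : SS v f a) : SS v (-f) a :=
  fun i => by rw [coeff_neg, v.map_neg]; exact hf i

lemma BB.sub {f g : F[X]} {a : ℚ} (hf : BB v f a) (hg : BB v g a) : BB v (f - g) a := by
  rw [sub_eq_add_neg]; exact hf.add hg.neg

lemma SS.sub {f g : F[X]} {a : ℚ} (hf : SS v f a) (hg : SS v g a) : SS v (f - g) a := by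
  rw [sub_eq_add_neg]; exact hf.add hg.neg

lemma BB.mul {f g : F[X]} {a b : ℚ} (hf : BB v f a) (hg : BB v g b) :
    BB v (f * g) (a + b) := fun i => by
  rw [coeff_mul]
  refine v.map_le_sum fun p _ => ?_
  rw [v.map_mul, WithTop.coe_add]
  exact add_le_add (hf _) (hg _)

lemma BB.mulSS {f g : F[X]} {a b : ℚ} (hf : BB v f a) (hg : SS v g b) :
    SS v (f * g) (a + b) := fun i => by
  rw [coeff_mul]
  refine v.map_lt_sum (WithTop.coe_ne_top) fun p _ => ?_
  rw [v.map_mul, WithTop.coe_add]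
  exact WithTop.add_lt_add_of_le_of_lt WithTop.coe_ne_top (hf _) (hg _)

lemma BB_C {x : F} {a : ℚ} (h : (a : WithTop ℚ) ≤ v x) : BB v (C x) a := fun i => by
  rw [coeff_C]; split_ifs <;> simp [h]

lemma BB_monomial {x : F} {a : ℚ} (n : ℕ) (h : (a : WithTop ℚ) ≤ v x) :
    BB v (monomial n x) a := fun i => by
  rw [coeff_monomial]; split_ifs <;> simp [h]

lemma SS_zero (a : ℚ) : SS v 0 a := fun i => by simp [WithTop.coe_lt_top a]

lemma BB_two {e : ℚ} (he : v 2 = e) : BB v (2 : F[X]) e := by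
  have : (2 : F[X]) = C 2 := (map_ofNat C 2).symm
  rw [this]
  exact BB_C he.ge

lemma v_add_eq {x y : F} {a : ℚ} (hx : v x = a) (hy : (a : WithTop ℚ) < v y) :
    v (x + y) = a := by
  rw [← hx] at hy ⊢
  rw [add_comm]; exact v.map_add_eq_of_lt_right hy

/-- Squares modulo 2. -/
lemma sq_sum (s : Finset ℕ) (a : ℕ → F) (m : ℚ) (ha : ∀ i, (m : WithTop ℚ) ≤ v (a i)) :
    BB v (∑ i ∈ s, monomial i (a i)) m ∧ ∃ r, BB v r (2 * m) ∧
      (∑ i ∈ s, monomial i (a i)) ^ 2 = ∑ i ∈ s, monomial (2 * i) (a i ^ 2) + 2 * r := by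
  classical
  induction s using Finset.induction_on with
  | empty => exact ⟨by simpa using (SS_zero m).toBB, 0, (SS_zero _).toBB, by simp⟩
  | insert x s hx ih =>
    obtain ⟨hB, r, hr, hs⟩ := ih
    rw [Finset.sum_insert hx, Finset.sum_insert hx]
    have h1 := BB_monomial x (ha x)
    refine ⟨h1.add hB, r + monomial x (a x) * ∑ i ∈ s, monomial i (a i), ?_, ?_⟩
    · refine hr.add ?_
      rw [two_mul]
      exact h1.mul hB
    · have : monomial (2 * x) (a x ^ 2) = (monomial x (a x)) ^ 2 := by
        rw [monomial_pow, mul_comm]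
      rw [this, add_sq, hs]
      ring

lemma coeff_even_sum (s : Finset ℕ) (b : ℕ → F) (j : ℕ) :
    (∑ i ∈ s, monomial (2 * i) (b i)).coeff (2 * j) = if j ∈ s then b j else 0 := by
  classical
  rw [finsetSum_coeff]
  simp [coeff_monomial]

lemma coeff_odd_sum (s : Finset ℕ) (b : ℕ → F) (j : ℕ) (hj : Odd j) :
    (∑ i ∈ s, monomial (2 * i) (b i)).coeff j = 0 := by
  rw [finsetSum_coeff]
  refine Finset.sum_eq_zero fun i _ => ?_
  rw [coeff_monomial, if_neg]
  rintro rfl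
  exact (Nat.not_odd_iff_even.2 (even_two_mul i)) hj

lemma sq_poly {q : F[X]} {m e : ℚ} (he : v 2 = e) (he0 : 0 < e) (hq : BB v q m) :
    (∀ j, v (q.coeff j) = m → v ((q ^ 2).coeff (2 * j)) = ↑(2 * m)) ∧
    (∀ i, Odd i → ((2 * m : ℚ) : WithTop ℚ) < v ((q ^ 2).coeff i)) := by
  obtain ⟨-, r, hr, hs⟩ := sq_sum (v := v) q.support (fun i => q.coeff i) m hq
  have hq' : ∑ i ∈ q.support, monomial i (q.coeff i) = q := q.as_sum_support.symm
  rw [hq'] at hs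
  have h2r : SS v (2 * r) (2 * m) := ((BB_two he).mul hr).toSS (by linarith)
  constructor
  · intro j hj
    rw [hs, coeff_add, coeff_even_sum]
    have hj0 : q.coeff j ≠ 0 := by
      intro h0; rw [h0] at hj; simp at hj
    rw [if_pos (by simpa using hj0)]
    apply v_add_eq _ (h2r _)
    rw [v.map_pow, hj]
    rw [two_nsmul, two_mul]; rfl
  · intro i hi
    rw [hs, coeff_add, coeff_odd_sum _ _ _ hi, zero_add]
    exact h2r i

lemma sq_BB {q : F[X]} {c e : ℚ} (he : v 2 = e) (he0 : 0 < e) (hq : BB v (q ^ 2) c) :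
    BB v q (c / 2) := by
  by_cases h0 : q = 0
  · subst h0; exact (SS_zero _).toBB
  obtain ⟨m, hm⟩ := gauss_ex (v := v) h0
  obtain ⟨hB, j, hj⟩ := gauss_eq.1 hm
  have h := (sq_poly he he0 hB).1 j hj
  have h2 := hq (2 * j)
  rw [h] at h2
  have : c ≤ 2 * m := by exact_mod_cast h2
  exact hB.mono (by linarith)

lemma psd_deg {h q ρ : F[X]} (hp : IsPSD h q ρ) : ρ.natDegree ≤ h.natDegree + 1 := by
  have : ρ = h - q ^ 2 := by rw [hp.1]; ring
  rw [this]
  refine (natDegree_sub_le _ _).trans (max_le (by omega) ?_)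
  rw [natDegree_pow]
  exact hp.2

lemma crit_fwd [IsAlgClosed F] {h q ρ : F[X]} {c e t : ℚ} (he : v 2 = e) (he0 : 0 < e)
    (hp : IsPSD h q ρ) (hq : BB v q (c / 2)) (ht : t < c + 2 * e) (hρ : gaussVal v ρ = t)
    (hmax : ∀ q' ρ' : F[X], IsPSD h q' ρ' → gaussVal v ρ' ≤ gaussVal v ρ) :
    ∃ i, Odd i ∧ v (ρ.coeff i) = t := by
  by_contra hne
  push Not at hne
  obtain ⟨hB, -⟩ := gauss_eq.1 hρ
  have hsq : ∀ i, ∃ z : F, ρ.coeff (2 * i) = z ^ 2 := fun i => by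
    obtain ⟨z, hz⟩ := IsAlgClosed.exists_pow_nat_eq (ρ.coeff (2 * i)) (n := 2) (by norm_num)
    exact ⟨z, hz.symm⟩
  choose a ha using hsq
  have hav : ∀ i, ((t / 2 : ℚ) : WithTop ℚ) ≤ v (a i) := fun i => by
    have h1 := hB (2 * i)
    rw [ha, v.map_pow] at h1
    by_cases h0 : a i = 0
    · simp [h0]
    obtain ⟨x, hx⟩ := v_ne_top (v := v) h0
    rw [hx] at h1 ⊢
    rw [two_nsmul] at h1
    have : t ≤ x + x := by exact_mod_cast h1
    have : t / 2 ≤ x := by linarith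
    exact_mod_cast this
  set N := ρ.natDegree / 2 with hN
  obtain ⟨hsB, r, hr, hs⟩ := sq_sum (v := v) (Finset.range (N + 1)) a (t / 2) hav
  set s := ∑ i ∈ Finset.range (N + 1), monomial i (a i) with hsdef
  have hsdeg : s.natDegree ≤ N := by
    refine natDegree_sum_le_of_forall_le _ _ fun i hi => ?_
    refine (natDegree_monomial_le _).trans ?_
    have := Finset.mem_range.1 hi
    omega
  have hd := psd_deg hp
  have hpsd : IsPSD h (q + s) (h - (q + s) ^ 2) := by
    refine ⟨by ring, ?_⟩
    have h1 := natDegree_add_le q s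
    have h2 := hp.2
    rcases le_max_iff.1 h1 with h3 | h3 <;> omega
  have hle := hmax _ _ hpsd
  rw [hρ] at hle
  refine absurd hle (not_le.2 (lt_gauss.2 ?_))
  have hE : h - (q + s) ^ 2 =
      (ρ - ∑ i ∈ Finset.range (N + 1), monomial (2 * i) (a i ^ 2)) - 2 * r - 2 * (q * s) := by
    have : (q + s) ^ 2 = q ^ 2 + s ^ 2 + 2 * (q * s) := by ring
    rw [this, hs]
    conv_lhs => rw [hp.1]
    ring
  rw [hE]
  refine SS.sub (SS.sub ?_ ?_) ?_
  · intro i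
    rcases Nat.even_or_odd' i with ⟨j, rfl | rfl⟩
    · rw [coeff_sub, coeff_even_sum]
      split_ifs with hj
      · rw [ha, sub_self, v.map_zero]; exact WithTop.coe_lt_top _
      · rw [coeff_eq_zero_of_natDegree_lt, sub_self, v.map_zero]
        · exact WithTop.coe_lt_top _
        · rw [Finset.mem_range] at hj; omega
    · rw [coeff_sub, coeff_odd_sum _ _ _ (odd_two_mul_add_one j), sub_zero]
      exact lt_of_le_of_ne (hB _) (hne _ (odd_two_mul_add_one j)).symm
  · exact ((BB_two he).mul hr).toSS (by linarith)
  · exact ((BB_two he).mul (hq.mul hsB)).toSS (by linarith)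

lemma crit_bwd {h q ρ : F[X]} {c e t : ℚ} (he : v 2 = e) (he0 : 0 < e)
    (hp : IsPSD h q ρ) (hq : BB v q (c / 2)) (ht : t < c + 2 * e) (hρ : BB v ρ t)
    (hodd : ∃ i, Odd i ∧ v (ρ.coeff i) = t) (q' ρ' : F[X]) (hp' : IsPSD h q' ρ') :
    gaussVal v ρ' ≤ t := by
  by_contra hlt
  have hS : SS v ρ' t := lt_gauss.1 (not_le.1 hlt)
  obtain ⟨i, hi, hit⟩ := hodd
  set d := q' - q with hd
  have hE : ρ = (d ^ 2 + 2 * (q * d)) + ρ' := by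
    have h1 : ρ = h - q ^ 2 := by rw [hp.1]; ring
    have h2 : ρ' = h - q' ^ 2 := by rw [hp'.1]; ring
    rw [h1, h2, hd]; ring
  have key : ¬ (t : WithTop ℚ) < v ((d ^ 2 + 2 * (q * d)).coeff i) := by
    intro hc
    have : (t : WithTop ℚ) < v (ρ.coeff i) := by
      rw [hE, coeff_add]; exact v.map_lt_add hc (hS i)
    exact this.ne' hit
  apply key
  by_cases h0 : d = 0
  · rw [h0]; simp [WithTop.coe_lt_top t]
  obtain ⟨m, hm⟩ := gauss_ex (v := v) h0
  obtain ⟨hB, j, hj⟩ := gauss_eq.1 hm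
  have hcross := (BB_two he).mul (hq.mul hB)
  rcases le_or_gt (e + c / 2) m with hme | hme
  · have h1 : SS v (d ^ 2) t := by
      rw [sq]; exact (hB.mul hB).toSS (by linarith)
    exact (h1.add (hcross.toSS (by linarith))) i
  · obtain ⟨s1, s2⟩ := sq_poly he he0 hB
    have hx : v ((d ^ 2 + 2 * (q * d)).coeff (2 * j)) = ↑(2 * m) := by
      rw [coeff_add]
      exact v_add_eq (s1 j hj) (hcross.toSS (by linarith) _)
    have hdd : d ^ 2 + 2 * (q * d) = ρ - ρ' := by rw [hE]; ring
    have h3 : BB v (d ^ 2 + 2 * (q * d)) t := by rw [hdd]; exact hρ.sub hS.toBB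
    have h4 := h3 (2 * j)
    rw [hx] at h4
    have h5 : t ≤ 2 * m := by exact_mod_cast h4
    rw [coeff_add]
    refine v.map_lt_add ?_ (hcross.toSS (by linarith) i)
    exact lt_of_le_of_lt (by exact_mod_cast h5) (s2 i hi)

lemma prod_pos (s : Multiset F) (hs : ∀ x ∈ s, 0 < v x) :
    SS v ((s.map fun x => X - C x).prod - X ^ s.card) 0 := by
  induction s using Multiset.induction_on with
  | empty => simpa using SS_zero 0
  | cons x s ih =>
    have ih' := ih fun y hy => hs y (Multiset.mem_cons_of_mem hy)
    have hx := hs x (Multiset.mem_cons_self x s)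
    rw [Multiset.map_cons, Multiset.prod_cons, Multiset.card_cons]
    set P := (s.map fun x => X - C x).prod
    have hX : ∀ k, BB v (X ^ k : F[X]) 0 := fun k i => by
      rw [coeff_X_pow]; split_ifs <;> simp
    have hCx : SS v (C x) 0 := fun i => by
      rw [coeff_C]; split_ifs <;> simp [hx]
    have hP : BB v P 0 := by
      have := ih'.toBB.add (hX s.card)
      simpa using this
    have : (X - C x) * P - X ^ (s.card + 1) = X ^ 1 * (P - X ^ s.card) - P * C x := by ring
    rw [this]
    refine SS.sub ?_ ?_
    · simpa using (hX 1).mulSS ih'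
    · simpa using hP.mulSS hCx

lemma prod_neg (s : Multiset F) (hs : ∀ x ∈ s, v x < 0) :
    ∃ (b : F) (c : ℚ), v b = c ∧ SS v ((s.map fun x => X - C x).prod - C b) c := by
  induction s using Multiset.induction_on with
  | empty => exact ⟨1, 0, by simp, by simpa using SS_zero 0⟩
  | cons x s ih =>
    obtain ⟨b, c, hb, hS⟩ := ih fun y hy => hs y (Multiset.mem_cons_of_mem hy)
    have hx := hs x (Multiset.mem_cons_self x s)
    rw [Multiset.map_cons, Multiset.prod_cons]
    set P := (s.map fun x => X - C x).prod
    have hx0 : x ≠ 0 := by rintro rfl; simp at hx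
    obtain ⟨y, hy⟩ := v_ne_top (v := v) hx0
    have hy0 : y < 0 := by rw [hy] at hx; exact_mod_cast hx
    have hX : BB v (X : F[X]) 0 := fun i => by
      rw [coeff_X]; split_ifs <;> simp
    have hP : BB v P c := by
      have := hS.toBB.add (BB_C hb.ge)
      simpa using this
    refine ⟨-(b * x), y + c, ?_, ?_⟩
    · rw [v.map_neg, v.map_mul, hb, hy, add_comm]; rfl
    · have : (X - C x) * P - C (-(b * x)) = X * P - C x * (P - C b) := by
        rw [C_neg, C_mul]; ring
      rw [this]
      exact ((hX.mul hP).toSS (by linarith)).sub ((BB_C hy.ge).mulSS hS)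

lemma shape_pos [IsAlgClosed F] {h : F[X]} (h0 : h ≠ 0) (hr : ∀ x, h.IsRoot x → 0 < v x) :
    ∃ (a : F) (c : ℚ), v a = c ∧ SS v (h - C a * X ^ h.natDegree) c := by
  have hsp := IsAlgClosed.splits h
  obtain ⟨c, hc⟩ := v_ne_top (v := v) (leadingCoeff_ne_zero.2 h0)
  refine ⟨h.leadingCoeff, c, hc, ?_⟩
  have hS := prod_pos (v := v) h.roots fun x hx => hr x (isRoot_of_mem_roots hx)
  have := (BB_C hc.ge).mulSS hS
  rw [mul_sub, ← hsp.eq_prod_roots, ← hsp.natDegree_eq_card_roots, add_zero] at this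
  exact this

lemma shape_neg [IsAlgClosed F] {h : F[X]} (h0 : h ≠ 0) (hr : ∀ x, h.IsRoot x → v x < 0) :
    ∃ (a : F) (c : ℚ), v a = c ∧ SS v (h - C a) c := by
  have hsp := IsAlgClosed.splits h
  obtain ⟨c, hc⟩ := v_ne_top (v := v) (leadingCoeff_ne_zero.2 h0)
  obtain ⟨b, c', hb, hS⟩ := prod_neg (v := v) h.roots fun x hx => hr x (isRoot_of_mem_roots hx)
  refine ⟨h.leadingCoeff * b, c + c', by rw [v.map_mul, hc, hb]; rfl, ?_⟩
  have := (BB_C hc.ge).mulSS hS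
  rw [mul_sub, ← hsp.eq_prod_roots, ← C_mul] at this
  exact this

lemma wt_le {x : WithTop ℚ} {m c : ℚ} (h : (m : WithTop ℚ) ≤ x + c) :
    ((m - c : ℚ) : WithTop ℚ) ≤ x := by
  induction x using WithTop.recTopCoe with
  | top => exact le_top
  | coe x =>
    have : m ≤ x + c := by exact_mod_cast h
    have : m - c ≤ x := by linarith
    exact_mod_cast this

lemma wt_eq {x : WithTop ℚ} {m c : ℚ} (h : x + c = (m : WithTop ℚ)) :
    x = ((m - c : ℚ) : WithTop ℚ) := by
  induction x using WithTop.recTopCoe with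
  | top => simp at h
  | coe x =>
    have : x + c = m := by exact_mod_cast h
    have : x = m - c := by linarith
    exact_mod_cast this

lemma good_BB {h q ρ : F[X]} {c e : ℚ} (he : v 2 = e) (he0 : 0 ≤ e)
    (hc : gaussVal v h = c) (hg : IsGoodPSD v h q ρ) : BB v ρ c := by
  apply le_gauss.1
  rcases hg.2 with h1 | ⟨-, h1⟩
  · refine le_trans ?_ h1
    rw [hc, he]
    have : c ≤ c + (e + e) := by linarith
    exact_mod_cast this
  · rw [← hc]
    exact h1 0 h ⟨by simp, by simp⟩

lemma good_odd [IsAlgClosed F] {h q ρ : F[X]} {c e t : ℚ} (he : v 2 = e) (he0 : 0 < e)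
    (hc : gaussVal v h = c) (hg : IsGoodPSD v h q ρ) (hq : BB v q (c / 2))
    (ht : t < c + 2 * e) (hρ : gaussVal v ρ = t) :
    ∃ i, Odd i ∧ v (ρ.coeff i) = t := by
  rcases hg.2 with h1 | ⟨-, h1⟩
  · exfalso
    rw [hc, he, hρ] at h1
    have : c + (e + e) ≤ t := by exact_mod_cast h1
    linarith
  · exact crit_fwd he he0 hg.1 hq ht hρ h1

end Helpers

/-- Let `h₁, h₂` be nonzero, at most one of odd degree, with all roots
of `h₁` of positive valuation and all roots of `h₂` of negative valuation.  Given good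
part-square decompositions `hᵢ = qᵢ² + ρᵢ` with `min (t₁, t₂) < 2 v 2`, the induced
decomposition `h₁h₂ = (q₁q₂)² + ρ` is a part-square decomposition with
`t = min (t₁, t₂)` (encoded by cross-addition of valuations) and it is good. -/
theorem stmt5 {Kbar : Type*} [Field Kbar] [IsAlgClosed Kbar]
    (v : AddValuation Kbar (WithTop ℚ)) (hchar : (2 : Kbar) ≠ 0)
    (hres : ResidueAlgClosed v)
    (h₁ h₂ : Kbar[X]) (hne₁ : h₁ ≠ 0) (hne₂ : h₂ ≠ 0)
    (hoddone : ¬(Odd h₁.natDegree ∧ Odd h₂.natDegree))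
    (hr₁ : ∀ x : Kbar, h₁.IsRoot x → 0 < v x)
    (hr₂ : ∀ x : Kbar, h₂.IsRoot x → v x < 0)
    (q₁ ρ₁ q₂ ρ₂ : Kbar[X])
    (hg₁ : IsGoodPSD v h₁ q₁ ρ₁) (hg₂ : IsGoodPSD v h₂ q₂ ρ₂)
    (hmin : gaussVal v ρ₁ < gaussVal v h₁ + (v 2 + v 2) ∨
            gaussVal v ρ₂ < gaussVal v h₂ + (v 2 + v 2)) :
    ∀ h q ρ : Kbar[X], h = h₁ * h₂ → q = q₁ * q₂ → ρ = h - q ^ 2 →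
      IsPSD h q ρ ∧
      gaussVal v ρ + (gaussVal v h₁ + gaussVal v h₂) =
        min (gaussVal v ρ₁ + gaussVal v h₂) (gaussVal v ρ₂ + gaussVal v h₁) +
          gaussVal v h ∧
      IsGoodPSD v h q ρ := by
  rintro h q ρ rfl rfl rfl
  obtain ⟨e, he⟩ := v_ne_top (v := v) hchar
  have he0' : 0 ≤ e := by
    have h1 : (0 : WithTop ℚ) ≤ v ((1 : Kbar) + 1) :=
      v.map_le_add (by simp) (by simp)
    rw [one_add_one_eq_two, he] at h1
    exact_mod_cast h1
  obtain ⟨a, c₁, hac, hS₁⟩ := shape_pos (v := v) hne₁ hr₁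
  obtain ⟨b, c₂, hbc, hS₂⟩ := shape_neg (v := v) hne₂ hr₂
  set n := h₁.natDegree with hn
  have hXn : BB v (X ^ n : Kbar[X]) 0 := fun i => by
    rw [coeff_X_pow]; split_ifs <;> simp
  have hn₁ : v (h₁.coeff n) = c₁ := by
    have : h₁.coeff n = a + (h₁ - C a * X ^ n).coeff n := by
      rw [coeff_sub, coeff_C_mul_X_pow]; simp
    rw [this]; exact v_add_eq hac (hS₁ n)
  have hB₁ : BB v h₁ c₁ := by
    have := hS₁.toBB.add (by simpa using (BB_C hac.ge).mul hXn)
    simpa using this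
  have hB₂ : BB v h₂ c₂ := by
    have := hS₂.toBB.add (BB_C hbc.ge)
    simpa using this
  have hv₁ : gaussVal v h₁ = c₁ := gauss_eq.2 ⟨hB₁, n, hn₁⟩
  have hv₂ : gaussVal v h₂ = c₂ := by
    refine gauss_eq.2 ⟨hB₂, 0, ?_⟩
    have : h₂.coeff 0 = b + (h₂ - C b).coeff 0 := by
      rw [coeff_sub, coeff_C_zero]; simp
    rw [this]; exact v_add_eq hbc (hS₂ 0)
  have hρ₁ := good_BB he he0' hv₁ hg₁
  have hρ₂ := good_BB he he0' hv₂ hg₂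
  have he0 : 0 < e := by
    refine lt_of_le_of_ne he0' fun h0 => ?_
    rw [hv₁, hv₂, he, ← h0] at hmin
    simp only [WithTop.coe_zero, add_zero] at hmin
    rcases hmin with h1 | h1
    · exact absurd (le_gauss.2 hρ₁) (not_le.2 h1)
    · exact absurd (le_gauss.2 hρ₂) (not_le.2 h1)
  have hq₁ : BB v q₁ (c₁ / 2) := by
    apply sq_BB he he0
    have : q₁ ^ 2 = h₁ - ρ₁ := by rw [hg₁.1.1]; ring
    rw [this]; exact hB₁.sub hρ₁
  have hq₂ : BB v q₂ (c₂ / 2) := by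
    apply sq_BB he he0
    have : q₂ ^ 2 = h₂ - ρ₂ := by rw [hg₂.1.1]; ring
    rw [this]; exact hB₂.sub hρ₂
  -- the second remainder has strictly positive relative valuation
  have hSρ₂ : SS v ρ₂ c₂ := by
    apply lt_gauss.1
    rcases hg₂.2 with h1 | ⟨-, h1⟩
    · refine lt_of_lt_of_le ?_ h1
      rw [hv₂, he]
      have : c₂ < c₂ + (e + e) := by linarith
      exact_mod_cast this
    · obtain ⟨z, hz⟩ := IsAlgClosed.exists_pow_nat_eq b (n := 2) (by norm_num)
      refine lt_of_lt_of_le (lt_gauss.2 hS₂) (h1 (C z) _ ⟨?_, by simp⟩)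
      rw [← hz, C_pow]; ring
  -- odd degree forces relative valuation zero
  have hnodd : SS v ρ₁ c₁ → Even n := by
    intro hS
    by_contra hno
    rw [Nat.not_even_iff_odd] at hno
    have h1 := (sq_poly he he0 hq₁).2 n hno
    have h2 : h₁.coeff n = (q₁ ^ 2).coeff n + ρ₁.coeff n := by
      rw [← coeff_add, ← hg₁.1.1]
    have h3 : (c₁ : WithTop ℚ) < v (h₁.coeff n) := by
      rw [h2]
      refine v.map_lt_add ?_ (hS n)
      have : 2 * (c₁ / 2) = c₁ := by ring
      rwa [this] at h1
    exact h3.ne' hn₁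
  have hdeg : (h₁ * h₂).natDegree = n + h₂.natDegree := natDegree_mul hne₁ hne₂
  have hpsd : IsPSD (h₁ * h₂) (q₁ * q₂) (h₁ * h₂ - (q₁ * q₂) ^ 2) := by
    refine ⟨by ring, ?_⟩
    rw [hdeg]
    have h1 := natDegree_mul_le (p := q₁) (q := q₂)
    have h2 := hg₁.1.2
    have h3 := hg₂.1.2
    rw [← hn] at h2
    rw [not_and_or, Nat.not_odd_iff_even, Nat.not_odd_iff_even] at hoddone
    rcases hoddone with ⟨k, hk⟩ | ⟨k, hk⟩ <;> omega
  -- the minimum is rational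
  obtain ⟨M, hM⟩ : ∃ M : ℚ,
      min (gaussVal v ρ₁ + (c₂ : WithTop ℚ)) (gaussVal v ρ₂ + (c₁ : WithTop ℚ)) = M := by
    have : min (gaussVal v ρ₁ + (c₂ : WithTop ℚ)) (gaussVal v ρ₂ + (c₁ : WithTop ℚ)) ≠ ⊤ := by
      intro ht
      rw [min_eq_top] at ht
      rcases hmin with h1 | h1
      · have := lt_of_lt_of_le h1 le_top
        rcases WithTop.add_eq_top.1 ht.1 with h2 | h2
        · exact this.ne h2
        · exact WithTop.coe_ne_top h2
      · have := lt_of_lt_of_le h1 le_top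
        rcases WithTop.add_eq_top.1 ht.2 with h2 | h2
        · exact this.ne h2
        · exact WithTop.coe_ne_top h2
    exact ⟨_, (WithTop.coe_untop _ this).symm⟩
  obtain ⟨τ, rfl⟩ : ∃ τ, M = c₁ + c₂ + τ := ⟨M - c₁ - c₂, by ring⟩
  have hτ₁ : BB v ρ₁ (c₁ + τ) := by
    have := wt_le (hM ▸ min_le_left _ _ : ((c₁ + c₂ + τ : ℚ) : WithTop ℚ) ≤ _)
    have h2 := le_gauss.1 this
    exact h2.mono (by linarith)
  have hτ₂ : BB v ρ₂ (c₂ + τ) := by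
    have := wt_le (hM ▸ min_le_right _ _ : ((c₁ + c₂ + τ : ℚ) : WithTop ℚ) ≤ _)
    have h2 := le_gauss.1 this
    exact h2.mono (by linarith)
  have hτe : τ < 2 * e := by
    rw [hv₁, hv₂, he] at hmin
    rcases hmin with h1 | h1
    · have h2 := lt_of_le_of_lt (le_gauss.2 hτ₁) h1
      have : c₁ + τ < c₁ + (e + e) := by exact_mod_cast h2
      linarith
    · have h2 := lt_of_le_of_lt (le_gauss.2 hτ₂) h1
      have : c₂ + τ < c₂ + (e + e) := by exact_mod_cast h2
      linarith
  have heq : gaussVal v ρ₁ = ((c₁ + τ : ℚ) : WithTop ℚ) ∨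
      (SS v ρ₁ (c₁ + τ) ∧ gaussVal v ρ₂ = ((c₂ + τ : ℚ) : WithTop ℚ)) := by
    by_cases h1 : gaussVal v ρ₁ = ((c₁ + τ : ℚ) : WithTop ℚ)
    · exact Or.inl h1
    · refine Or.inr ⟨lt_gauss.1 (lt_of_le_of_ne (le_gauss.2 hτ₁) (Ne.symm h1)), ?_⟩
      rcases min_choice (gaussVal v ρ₁ + (c₂ : WithTop ℚ)) (gaussVal v ρ₂ + (c₁ : WithTop ℚ))
        with h2 | h2
      · rw [hM] at h2
        exfalso; apply h1
        rw [wt_eq h2.symm]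
        congr 1; ring
      · rw [hM] at h2
        rw [wt_eq h2.symm]
        congr 1; ring
  have hτ0 : 0 ≤ τ := by
    rcases heq with h1 | ⟨-, h1⟩
    · have := le_gauss.2 hρ₁
      rw [h1] at this
      have : c₁ ≤ c₁ + τ := by exact_mod_cast this
      linarith
    · have := le_gauss.2 hρ₂
      rw [h1] at this
      have : c₂ ≤ c₂ + τ := by exact_mod_cast this
      linarith
  -- the main expansion
  set ρ := h₁ * h₂ - (q₁ * q₂) ^ 2 with hρdef
  set R := (h₁ - C a * X ^ n) * ρ₂ + (h₂ - C b) * ρ₁ - ρ₁ * ρ₂ with hR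
  have hexp : ρ = C a * (ρ₂ * X ^ n) + C b * ρ₁ + R := by
    have h1 : q₁ ^ 2 = h₁ - ρ₁ := by rw [hg₁.1.1]; ring
    have h2 : q₂ ^ 2 = h₂ - ρ₂ := by rw [hg₂.1.1]; ring
    rw [hρdef, hR, mul_pow, h1, h2]; ring
  have hRS : SS v R (c₁ + c₂ + τ) := by
    refine SS.sub (SS.add ?_ ?_) ?_
    · rw [mul_comm]; exact (hτ₂.mulSS hS₁).mono (by linarith)
    · rw [mul_comm]; exact (hτ₁.mulSS hS₂).mono (by linarith)
    · exact (hτ₁.mulSS hSρ₂).mono (by linarith)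
  have hA : BB v (C a * (ρ₂ * X ^ n)) (c₁ + c₂ + τ) :=
    ((BB_C hac.ge).mul (hτ₂.mul hXn)).mono (by linarith)
  have hBρ : BB v (C b * ρ₁) (c₁ + c₂ + τ) :=
    ((BB_C hbc.ge).mul hτ₁).mono (by linarith)
  have hBB : BB v ρ (c₁ + c₂ + τ) := by
    rw [hexp]; exact (hA.add hBρ).add hRS.toBB
  have hodd : ∃ i, Odd i ∧ v (ρ.coeff i) = ((c₁ + c₂ + τ : ℚ) : WithTop ℚ) := by
    rcases heq with h1 | ⟨h1, h2⟩
    · obtain ⟨i, hi, hiv⟩ := good_odd he he0 hv₁ hg₁ hq₁ (by linarith) h1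
      refine ⟨i, hi, ?_⟩
      have hmain : v ((C b * ρ₁).coeff i) = ((c₁ + c₂ + τ : ℚ) : WithTop ℚ) := by
        rw [coeff_C_mul, v.map_mul, hbc, hiv, ← WithTop.coe_add]
        congr 1; ring
      have hrest : ((c₁ + c₂ + τ : ℚ) : WithTop ℚ) < v ((C a * (ρ₂ * X ^ n)).coeff i) := by
        rcases Nat.even_or_odd n with hev | hod
        · have hlt : i < n := by
            have hle : i ≤ ρ₁.natDegree := by
              apply le_natDegree_of_ne_zero
              intro h0; rw [h0, v.map_zero] at hiv; exact WithTop.coe_ne_top hiv.symm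
            have hd := psd_deg hg₁.1
            have hd2 := hg₁.1.2
            have hd3 : ρ₁.natDegree ≤ n := by
              have : ρ₁ = h₁ - q₁ ^ 2 := by rw [hg₁.1.1]; ring
              rw [this]
              refine (natDegree_sub_le _ _).trans (max_le le_rfl ?_)
              rw [natDegree_pow]
              obtain ⟨k, hk⟩ := hev
              omega
            obtain ⟨k, hk⟩ := hev
            obtain ⟨l, hl⟩ := hi
            omega
          rw [coeff_C_mul, coeff_mul_X_pow', if_neg (by omega), mul_zero, v.map_zero]
          exact WithTop.coe_lt_top _
        · have ht0 : τ = 0 := by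
            by_contra hne
            have hpos : 0 < τ := lt_of_le_of_ne hτ0 (Ne.symm hne)
            exact (Nat.not_even_iff_odd.2 hod) (hnodd (hτ₁.toSS (by linarith)))
          have hx : SS v (C a * (ρ₂ * X ^ n)) (c₁ + c₂ + τ) := by
            have := (BB_C hac.ge).mulSS (hXn.mulSS hSρ₂)
            rw [mul_comm ρ₂]
            exact this.mono (by linarith)
          exact hx i
      have : ρ.coeff i =
          (C b * ρ₁).coeff i + ((C a * (ρ₂ * X ^ n)).coeff i + R.coeff i) := by
        rw [hexp]; simp only [coeff_add]; ring
      rw [this]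
      exact v_add_eq hmain (v.map_lt_add hrest (hRS i))
    · obtain ⟨i, hi, hiv⟩ := good_odd he he0 hv₂ hg₂ hq₂ (by linarith) h2
      have hev : Even n := hnodd (h1.mono (by linarith))
      refine ⟨i + n, hi.add_even hev, ?_⟩
      have hmain : v ((C a * (ρ₂ * X ^ n)).coeff (i + n)) =
          ((c₁ + c₂ + τ : ℚ) : WithTop ℚ) := by
        rw [coeff_C_mul, coeff_mul_X_pow, v.map_mul, hac, hiv, ← WithTop.coe_add]
        congr 1; ring
      have hrest : SS v (C b * ρ₁) (c₁ + c₂ + τ) :=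
        ((BB_C hbc.ge).mulSS h1).mono (by linarith)
      rw [hexp, add_assoc, coeff_add, coeff_add]
      exact v_add_eq hmain (v.map_lt_add (hrest _) (hRS _))
  have hvρ : gaussVal v ρ = ((c₁ + c₂ + τ : ℚ) : WithTop ℚ) :=
    gauss_eq.2 ⟨hBB, hodd.imp fun i hi => hi.2⟩
  have hvh : gaussVal v (h₁ * h₂) = ((c₁ + c₂ : ℚ) : WithTop ℚ) := by
    refine gauss_eq.2 ⟨hB₁.mul hB₂, n, ?_⟩
    have h1 : h₁ * h₂ = C (a * b) * X ^ n +
        (h₂ * (h₁ - C a * X ^ n) + (C a * X ^ n) * (h₂ - C b)) := by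
      rw [C_mul]; ring
    have h2 : SS v (h₂ * (h₁ - C a * X ^ n) + (C a * X ^ n) * (h₂ - C b)) (c₁ + c₂) := by
      refine SS.add ?_ ?_
      · exact (hB₂.mulSS hS₁).mono (by linarith)
      · exact (((BB_C hac.ge).mul hXn).mulSS hS₂).mono (by linarith)
    rw [h1, coeff_add]
    refine v_add_eq ?_ (h2 n)
    rw [coeff_C_mul_X_pow, if_pos rfl, v.map_mul, hac, hbc]; rfl
  have hqq : BB v (q₁ * q₂) ((c₁ + c₂) / 2) := (hq₁.mul hq₂).mono (by linarith)
  refine ⟨hpsd, ?_, hpsd, Or.inr ⟨?_, ?_⟩⟩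
  · rw [hv₁, hv₂, hM, hvρ, hvh]; rfl
  · rw [hvρ, hvh, he]
    have : c₁ + c₂ + τ < c₁ + c₂ + (e + e) := by linarith
    exact_mod_cast this
  · intro q' ρ' hp'
    rw [hvρ]
    exact crit_bwd he he0 hpsd hqq (by linarith) hBB hodd q' ρ' hp'
end

section
/- Let S be a finite multiset of elements of K̄ written as a multiset sum S = S₁ + ⋯ + S_N, and let α ∈ K̄ and b ∈ ℚ. Then: (a) 𝔱^S(α,b) ≥ min{𝔱^{S₁}(α,b), …, 𝔱^{S_N}(α,b)}; and (b) this inequality is an equality in each of the following two cases: (i) the minimum on the right-hand side is attained by exactly one index i; (ii) N = 2, every a ∈ S₁ satisfies v(a − α) < b, and there exist α′ ∈ K̄ with v(α′ − α) ≥ b and a rational b′ > b such that every a ∈ S₂ satisfies v(a − α′) ≥ b′. -/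
open Polynomial

/-- The monic polynomial `h_S := ∏_{a ∈ S} (z − a)` attached to a finite multiset `S`. -/
noncomputable def rootsPoly {Kbar : Type*} [Field Kbar] (S : Multiset Kbar) : Kbar[X] :=
  (S.map fun a => X - C a).prod

/-- `TVal v S α b t` expresses that `𝔱^S(α, b) = t`, i.e. (for some, equivalently any,
`β ∈ K̄ˣ` with `v β = b`) that
`t = min (2v(2), sup { v ρ − v (h_S(βz+α)) : h_S(βz+α) = q² + ρ part-square dec. })`;
the subtraction is avoided by adding `v (h_S(βz+α))` throughout and the truncated
supremum is expressed via `IsLUB`. -/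
def TVal {Kbar : Type*} [Field Kbar] (v : AddValuation Kbar (WithTop ℚ))
    (S : Multiset Kbar) (α : Kbar) (b t : ℚ) : Prop :=
  ∃ β : Kbar, β ≠ 0 ∧ v β = (b : WithTop ℚ) ∧
    IsLUB {u : WithTop ℚ |
        ∃ q ρ : Kbar[X], IsPSD ((rootsPoly S).comp (C β * X + C α)) q ρ ∧
          u = min (gaussVal v ((rootsPoly S).comp (C β * X + C α)) + (v 2 + v 2))
                (gaussVal v ρ)}
      (gaussVal v ((rootsPoly S).comp (C β * X + C α)) + (t : WithTop ℚ))

section Helpers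

/-- All coefficients have valuation at least `r`. -/
def GV {F : Type*} [Field F] (v : AddValuation F (WithTop ℚ)) (r : ℚ) (p : F[X]) : Prop :=
  ∀ i, (r : WithTop ℚ) ≤ v (p.coeff i)

/-- The Gauss valuation is exactly `x`. -/
def GEx {F : Type*} [Field F] (v : AddValuation F (WithTop ℚ)) (x : ℚ) (p : F[X]) : Prop :=
  GV v x p ∧ ∃ i, v (p.coeff i) = (x : WithTop ℚ)

variable {F : Type*} [Field F] {v : AddValuation F (WithTop ℚ)}

lemma GV.mono {r s : ℚ} {p : F[X]} (h : GV v r p) (hs : s ≤ r) : GV v s p :=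
  fun i => le_trans (by exact_mod_cast hs) (h i)

lemma GV.add {r : ℚ} {p q : F[X]} (hp : GV v r p) (hq : GV v r q) : GV v r (p + q) := by
  intro i
  rw [coeff_add]
  exact v.map_le_add (hp i) (hq i)

lemma GV.neg {r : ℚ} {p : F[X]} (hp : GV v r p) : GV v r (-p) := by
  intro i
  rw [coeff_neg, AddValuation.map_neg]
  exact hp i

lemma GV.sub {r : ℚ} {p q : F[X]} (hp : GV v r p) (hq : GV v r q) : GV v r (p - q) := by
  rw [sub_eq_add_neg]
  exact hp.add hq.neg

lemma GV.zero {r : ℚ} : GV v r (0 : F[X]) := by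
  intro i
  simp

lemma GV.mul {r s : ℚ} {p q : F[X]} (hp : GV v r p) (hq : GV v s q) :
    GV v (r + s) (p * q) := by
  intro i
  rw [coeff_mul]
  apply v.map_le_sum
  intro x _
  rw [v.map_mul, WithTop.coe_add]
  exact add_le_add (hp _) (hq _)

lemma GV.sum {ι : Type*} {s : Finset ι} {f : ι → F[X]} {r : ℚ} (h : ∀ i ∈ s, GV v r (f i)) :
    GV v r (∑ i ∈ s, f i) := by
  intro j
  rw [finsetSum_coeff]
  exact v.map_le_sum fun i hi => h i hi j

lemma GV.C {r : ℚ} {c : F} (h : (r : WithTop ℚ) ≤ v c) : GV v r (Polynomial.C c) := by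
  intro i
  rw [coeff_C]
  split_ifs
  · exact h
  · simp

lemma GV.X : GV v 0 (Polynomial.X : F[X]) := by
  intro i
  rw [coeff_X]
  split_ifs <;> simp

lemma GV.one : GV v 0 (1 : F[X]) := by
  rw [← Polynomial.C_1]
  exact GV.C (by simp)

lemma GV.pow {p : F[X]} (hp : GV v 0 p) (n : ℕ) : GV v 0 (p ^ n) := by
  induction n with
  | zero => simpa using GV.one
  | succ n ih => rw [pow_succ]; simpa using ih.mul hp

lemma v_nat_nonneg (n : ℕ) : (0 : WithTop ℚ) ≤ v (n : F) := by
  induction n with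
  | zero => simp
  | succ n ih => push_cast; exact v.map_le_add ih (by simp)

lemma GV.derivative {r : ℚ} {p : F[X]} (hp : GV v r p) :
    GV v r (Polynomial.derivative p) := by
  intro i
  rw [coeff_derivative, v.map_mul]
  have h1 := hp (i + 1)
  have h2 := v_nat_nonneg (v := v) (i + 1)
  push_cast at h2
  calc (r : WithTop ℚ) = r + 0 := by simp
    _ ≤ _ := add_le_add h1 h2

lemma GV.comp {r : ℚ} {p l : F[X]} (hp : GV v r p) (hl : GV v 0 l) : GV v r (p.comp l) := by
  rw [comp_eq_sum_left, Polynomial.sum]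
  apply GV.sum
  intro i _
  simpa using (GV.C (hp i)).mul (hl.pow i)

lemma gex_exists {p : F[X]} (hp : p ≠ 0) : ∃ x : ℚ, GEx v x p := by
  obtain ⟨i, hi, hmin⟩ := p.support.exists_min_image (fun i => v (p.coeff i))
    (by simpa using hp)
  have hne : v (p.coeff i) ≠ ⊤ := by
    rw [ne_eq, AddValuation.top_iff]; exact mem_support_iff.1 hi
  obtain ⟨x, hx⟩ := WithTop.ne_top_iff_exists.1 hne
  refine ⟨x, fun j => ?_, i, hx.symm⟩
  by_cases hj : p.coeff j = 0
  · simp [hj]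
  · rw [hx]; exact hmin j (mem_support_iff.2 hj)

lemma GEx.ne_zero {x : ℚ} {p : F[X]} (h : GEx v x p) : p ≠ 0 := by
  rintro rfl
  obtain ⟨i, hi⟩ := h.2
  simp at hi

lemma GEx.le {x r : ℚ} {p : F[X]} (h : GEx v x p) (hr : GV v r p) : r ≤ x := by
  obtain ⟨i, hi⟩ := h.2
  have := hr i
  rw [hi] at this
  exact_mod_cast this

lemma GEx.unique {x y : ℚ} {p : F[X]} (h : GEx v x p) (h' : GEx v y p) : x = y :=
  le_antisymm (h'.le h.1) (h.le h'.1)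

lemma GEx.mul {x y : ℚ} {p q : F[X]} (hp : GEx v x p) (hq : GEx v y q) :
    GEx v (x + y) (p * q) := by
  classical
  refine ⟨hp.1.mul hq.1, ?_⟩
  obtain ⟨i, hi1, hi2⟩ : ∃ i, v (p.coeff i) = x ∧ ∀ k < i, (x : WithTop ℚ) < v (p.coeff k) :=
    ⟨Nat.find hp.2, Nat.find_spec hp.2, fun k hk =>
      lt_of_le_of_ne (hp.1 k) (fun h => Nat.find_min hp.2 hk h.symm)⟩
  obtain ⟨j, hj1, hj2⟩ : ∃ j, v (q.coeff j) = y ∧ ∀ k < j, (y : WithTop ℚ) < v (q.coeff k) :=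
    ⟨Nat.find hq.2, Nat.find_spec hq.2, fun k hk =>
      lt_of_le_of_ne (hq.1 k) (fun h => Nat.find_min hq.2 hk h.symm)⟩
  refine ⟨i + j, ?_⟩
  rw [coeff_mul, ← Finset.add_sum_erase _ _ (a := (i, j)) (by simp)]
  have h1 : v (p.coeff i * q.coeff j) = ((x + y : ℚ) : WithTop ℚ) := by
    rw [v.map_mul, hi1, hj1, WithTop.coe_add]
  rw [AddValuation.map_add_eq_of_lt_left, h1]
  rw [h1]
  apply v.map_lt_sum (WithTop.coe_ne_top)
  rintro ⟨a, c⟩ hac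
  have hac2 : a + c = i + j := Finset.HasAntidiagonal.mem_antidiagonal.1 (Finset.mem_of_mem_erase hac)
  simp only [Finset.mem_erase, ne_eq, Prod.mk.injEq] at hac
  rw [v.map_mul, WithTop.coe_add]
  have : a < i ∨ c < j := by omega
  rcases this with h | h
  · exact WithTop.add_lt_add_of_lt_of_le WithTop.coe_ne_top (hi2 a h) (hq.1 c)
  · exact WithTop.add_lt_add_of_le_of_lt WithTop.coe_ne_top (hp.1 a) (hj2 c h)

lemma GV.cancel {r : ℚ} {h p : F[X]} (hh : GEx v 0 h) (hp : GV v r (h * p)) : GV v r p := by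
  by_cases h0 : p = 0
  · rw [h0]; exact GV.zero
  obtain ⟨y, hy⟩ := gex_exists (v := v) h0
  have := (hh.mul hy).le hp
  exact hy.1.mono (by linarith)

lemma GV.of_sq {r : ℚ} {p : F[X]} (hp : GV v r (p ^ 2)) : GV v (r / 2) p := by
  by_cases h0 : p = 0
  · rw [h0]; exact GV.zero
  obtain ⟨y, hy⟩ := gex_exists (v := v) h0
  rw [sq] at hp
  have := (hy.mul hy).le hp
  exact hy.1.mono (by linarith)

lemma gaussVal_le_iff {r : ℚ} {p : F[X]} : (r : WithTop ℚ) ≤ gaussVal v p ↔ GV v r p := by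
  unfold gaussVal GV
  rw [Finset.le_inf_iff]
  constructor
  · intro h i
    by_cases hi : p.coeff i = 0
    · simp [hi]
    · exact h i (mem_support_iff.2 hi)
  · intro h i _
    exact h i

lemma GEx.gaussVal {x : ℚ} {p : F[X]} (h : GEx v x p) : gaussVal v p = x := by
  apply le_antisymm
  · obtain ⟨i, hi⟩ := h.2
    rw [← hi]
    apply Finset.inf_le (f := fun i => v (p.coeff i))
    rw [mem_support_iff]
    intro h0
    rw [h0] at hi
    simp at hi
  · exact gaussVal_le_iff.2 h.1

lemma GEx.C {x : ℚ} {c : F} (h : v c = (x : WithTop ℚ)) : GEx v x (Polynomial.C c) :=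
  ⟨GV.C h.ge, 0, by simpa using h⟩

lemma GEx.one : GEx v 0 (1 : F[X]) := by
  rw [← Polynomial.C_1]
  exact GEx.C (by simp)

lemma GV.two {e : ℚ} (he : v 2 = (e : WithTop ℚ)) : GV v e (2 : F[X]) := by
  have := GV.C (v := v) he.ge
  rwa [map_ofNat] at this

lemma half_le {r : ℚ} {c : F} (h : (r : WithTop ℚ) ≤ v (c ^ 2)) :
    ((r / 2 : ℚ) : WithTop ℚ) ≤ v c := by
  have h1 : GV v r ((Polynomial.C c) ^ 2) := by
    rw [← Polynomial.C_pow]; exact GV.C h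
  simpa using h1.of_sq 0

lemma v_odd {e : ℚ} (he : v 2 = (e : WithTop ℚ)) (hpos : 0 < e) (k : ℕ) :
    v ((2 * k + 1 : ℕ) : F) = 0 := by
  push_cast
  rw [AddValuation.map_add_eq_of_lt_right]
  · simp
  · rw [AddValuation.map_one, v.map_mul, he]
    calc (0 : WithTop ℚ) < (e : WithTop ℚ) := by exact_mod_cast hpos
      _ = e + 0 := by simp
      _ ≤ _ := add_le_add le_rfl (v_nat_nonneg k)

/-- Removing high degree terms of the square part. -/
lemma degree_reduce {e r x : ℚ} (he : v 2 = (e : WithTop ℚ)) (hr0 : 0 ≤ r) (hr : r ≤ 2 * e)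
    {h : F[X]} (hh : GV v x h) : ∀ (n : ℕ) (q : F[X]), q.natDegree ≤ n → GV v (x + r) (h - q ^ 2) →
    ∃ q' : F[X], 2 * q'.natDegree ≤ h.natDegree ∧ GV v (x + r) (h - q' ^ 2) := by
  intro n
  induction n with
  | zero =>
    intro q hq hG
    exact ⟨q, by omega, hG⟩
  | succ n ih =>
    intro q hq hG
    by_cases hd : 2 * q.natDegree ≤ h.natDegree
    · exact ⟨q, hd, hG⟩
    have hq0 : GV v (x / 2) q := by
      have h1 : GV v x (q ^ 2) := by
        have := hh.sub (hG.mono (s := x) (by linarith))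
        simpa using this
      exact h1.of_sq
    have hc : (((x + r) / 2 : ℚ) : WithTop ℚ) ≤ v q.leadingCoeff := by
      apply half_le
      have h1 := hG (q.natDegree + q.natDegree)
      rw [coeff_sub, coeff_eq_zero_of_natDegree_lt (by omega), sq, coeff_mul_degree_add_degree,
        zero_sub, AddValuation.map_neg, ← sq] at h1
      exact h1
    have hM : GV v ((x + r) / 2) (monomial q.natDegree q.leadingCoeff) := by
      rw [← C_mul_X_pow_eq_monomial]
      simpa using (GV.C hc).mul (GV.X.pow q.natDegree)
    apply ih q.eraseLead
    · have := eraseLead_natDegree_le q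
      omega
    · have hid : h - q.eraseLead ^ 2 = (h - q ^ 2) +
          2 * (q * monomial q.natDegree q.leadingCoeff)
            - monomial q.natDegree q.leadingCoeff * monomial q.natDegree q.leadingCoeff := by
        rw [← self_sub_monomial_natDegree_leadingCoeff]
        ring
      rw [hid]
      refine (hG.add (((GV.two he).mul (hq0.mul hM)).mono ?_)).sub ((hM.mul hM).mono ?_)
      · linarith
      · linarith

/-- The core estimate. -/
lemma core {e r s : ℚ} (he : v 2 = (e : WithTop ℚ)) (hs0 : 0 ≤ s) (hsr : s ≤ r) (hr : r ≤ 2 * e)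
    {h₁ h₂ q₀ q₁ q₂ : F[X]} (hh₁ : GV v 0 h₁) (hh₂ : GV v 0 h₂)
    (H₀ : GV v r (h₁ * h₂ - q₀ ^ 2)) (H₁ : GV v s (h₁ - q₁ ^ 2)) (H₂ : GV v s (h₂ - q₂ ^ 2)) :
    GV v (min r (e + s / 2))
      (h₂ * derivative (h₁ - q₁ ^ 2) + h₁ * derivative (h₂ - q₂ ^ 2)) := by
  have hq₁ : GV v 0 q₁ := by
    have h1 : GV v 0 (q₁ ^ 2) := by
      have := hh₁.sub (H₁.mono hs0)
      simpa using this
    simpa using h1.of_sq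
  have hq₂ : GV v 0 q₂ := by
    have h1 : GV v 0 (q₂ ^ 2) := by
      have := hh₂.sub (H₂.mono hs0)
      simpa using this
    simpa using h1.of_sq
  have hQ : GV v 0 (q₁ * q₂) := by simpa using hq₁.mul hq₂
  have hE : GV v (s / 2) (q₀ - q₁ * q₂) := by
    by_cases h0 : q₀ - q₁ * q₂ = 0
    · rw [h0]; exact GV.zero
    obtain ⟨x, hx⟩ := gex_exists (v := v) h0
    by_contra hcon
    have hxs : x < s / 2 := by
      by_contra h
      exact hcon (hx.1.mono (not_lt.1 h))
    have hid : (q₀ - q₁ * q₂) * (q₀ - q₁ * q₂) =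
        (h₁ * (h₂ - q₂ ^ 2) + h₂ * (h₁ - q₁ ^ 2) - (h₁ - q₁ ^ 2) * (h₂ - q₂ ^ 2)
          - (h₁ * h₂ - q₀ ^ 2)) - 2 * ((q₁ * q₂) * (q₀ - q₁ * q₂)) := by ring
    have hle : GV v (min s (e + x)) ((q₀ - q₁ * q₂) * (q₀ - q₁ * q₂)) := by
      rw [hid]
      refine GV.sub (GV.sub (GV.sub (GV.add ?_ ?_) ?_) ?_) ?_
      · exact (hh₁.mul H₂).mono (by simp)
      · exact (hh₂.mul H₁).mono (by simp)
      · exact (H₁.mul H₂).mono ((min_le_left _ _).trans (by linarith))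
      · exact H₀.mono ((min_le_left _ _).trans hsr)
      · exact ((GV.two he).mul (hQ.mul hx.1)).mono ((min_le_right _ _).trans (by linarith))
    have := (hx.mul hx).le hle
    rcases min_le_iff.1 this with h | h <;> linarith
  have hid : h₂ * derivative (h₁ - q₁ ^ 2) + h₁ * derivative (h₂ - q₂ ^ 2) =
      derivative (h₁ * h₂ - q₀ ^ 2) + 2 * (
        (q₁ * q₂) * derivative (q₀ - q₁ * q₂) + (q₀ - q₁ * q₂) * derivative (q₁ * q₂)
        + (q₀ - q₁ * q₂) * derivative (q₀ - q₁ * q₂)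
        - (q₁ * derivative q₁) * (h₂ - q₂ ^ 2) - (q₂ * derivative q₂) * (h₁ - q₁ ^ 2)) := by
    simp only [derivative_sub, derivative_mul, sq]
    ring
  rw [hid]
  refine GV.add (H₀.derivative.mono (min_le_left _ _)) ?_
  refine GV.mono ((GV.two he).mul (s := s / 2) ?_) (min_le_right _ _)
  refine GV.sub (GV.sub (GV.add (GV.add ?_ ?_) ?_) ?_) ?_
  · exact (hQ.mul hE.derivative).mono (by linarith)
  · exact (hE.mul hQ.derivative).mono (by linarith)
  · exact (hE.mul hE.derivative).mono (by linarith)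
  · exact ((hq₁.mul hq₁.derivative).mul H₂).mono (by linarith)
  · exact ((hq₂.mul hq₂.derivative).mul H₁).mono (by linarith)

lemma sum_sq_aux {x : ℚ} (f : ℕ → F[X]) (hf : ∀ i, GV v x (f i)) (n : ℕ) :
    ∃ T : F[X], GV v (2 * x) T ∧
      (∑ i ∈ Finset.range n, f i) ^ 2 = ∑ i ∈ Finset.range n, f i ^ 2 + 2 * T := by
  induction n with
  | zero => exact ⟨0, GV.zero, by simp⟩
  | succ n ih =>
    obtain ⟨T, hT, h⟩ := ih
    refine ⟨T + (∑ i ∈ Finset.range n, f i) * f n, hT.add ?_, ?_⟩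
    · exact ((GV.sum fun i _ => hf i).mul (hf n)).mono (by linarith)
    · rw [Finset.sum_range_succ, Finset.sum_range_succ, add_sq, h]
      ring

/-- Improving a decomposition. -/
lemma improve [IsAlgClosed F] {e s s' : ℚ} (he : v 2 = (e : WithTop ℚ)) (hpos : 0 < e)
    (hs0 : 0 ≤ s) (hs' : s' ≤ e + s / 2) {h q : F[X]} (hh : GV v 0 h)
    (H : GV v s (h - q ^ 2)) (H' : GV v s' (derivative (h - q ^ 2))) :
    ∃ q' : F[X], GV v s' (h - q' ^ 2) := by
  have hq : GV v 0 q := by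
    have h1 : GV v 0 (q ^ 2) := by
      have := hh.sub (H.mono hs0)
      simpa using this
    simpa using h1.of_sq
  set ρ := h - q ^ 2 with hρ
  choose c hc using fun i : ℕ => IsAlgClosed.exists_pow_nat_eq (ρ.coeff (2 * i)) (n := 2) two_pos
  have hcv : ∀ i, ((s / 2 : ℚ) : WithTop ℚ) ≤ v (c i) := fun i =>
    half_le (by rw [hc]; exact H _)
  have hf : ∀ i, GV v (s / 2) (C (c i) * X ^ i) := fun i => by
    simpa using (GV.C (hcv i)).mul (GV.X.pow i)
  obtain ⟨T, hT, hsq⟩ := sum_sq_aux _ hf (ρ.natDegree + 1)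
  set g := ∑ i ∈ Finset.range (ρ.natDegree + 1), C (c i) * X ^ i with hg
  have hgv : GV v (s / 2) g := GV.sum fun i _ => hf i
  refine ⟨q + g, ?_⟩
  have hid : h - (q + g) ^ 2 =
      (ρ - ∑ i ∈ Finset.range (ρ.natDegree + 1), (C (c i) * X ^ i) ^ 2) - 2 * T - 2 * (q * g) := by
    have : h - (q + g) ^ 2 = ρ - g ^ 2 - 2 * (q * g) := by rw [hρ]; ring
    rw [this, hsq]; ring
  rw [hid]
  refine GV.sub (GV.sub ?_ ?_) ?_
  · intro j
    have hcoef : (∑ i ∈ Finset.range (ρ.natDegree + 1), (C (c i) * X ^ i) ^ 2).coeff j =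
        ∑ i ∈ Finset.range (ρ.natDegree + 1), if j = 2 * i then ρ.coeff (2 * i) else 0 := by
      rw [finsetSum_coeff]
      refine Finset.sum_congr rfl fun i _ => ?_
      rw [mul_pow, ← C_pow, hc, ← pow_mul, coeff_C_mul_X_pow, mul_comm i 2]
    rw [coeff_sub, hcoef]
    rcases Nat.even_or_odd' j with ⟨k, rfl | rfl⟩
    · have : (∑ i ∈ Finset.range (ρ.natDegree + 1),
          if 2 * k = 2 * i then ρ.coeff (2 * i) else 0) = ρ.coeff (2 * k) := by
        by_cases hk : k < ρ.natDegree + 1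
        · rw [Finset.sum_eq_single k]
          · simp
          · intro b _ hb
            rw [if_neg (by omega)]
          · intro hk'
            exact absurd (Finset.mem_range.2 hk) hk'
        · rw [coeff_eq_zero_of_natDegree_lt (by omega)]
          apply Finset.sum_eq_zero
          intro i hi
          rw [Finset.mem_range] at hi
          rw [if_neg (by omega)]
      rw [this]
      simp
    · rw [Finset.sum_eq_zero (fun i _ => if_neg (by omega)), sub_zero]
      have h1 := H' (2 * k)
      rw [coeff_derivative, v.map_mul] at h1
      have h2 := v_odd he hpos k
      push_cast at h1 h2
      rw [h2, add_zero] at h1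
      exact h1
  · exact ((GV.two he).mul hT).mono (by linarith)
  · exact ((GV.two he).mul (hq.mul hgv)).mono (by linarith)

lemma iterate_aux {P : ℚ → Prop} {e r : ℚ} (hanti : ∀ x y, x ≤ y → P y → P x) (h0 : P 0)
    (hr : r ≤ 2 * e) (hstep : ∀ s, 0 ≤ s → s ≤ r → P s → P (min r (e + s / 2))) :
    ∀ r' < r, P r' := by
  intro r' hr'
  by_cases hr0 : r ≤ 0
  · exact hanti _ _ (by linarith) h0
  have key : ∀ k : ℕ, P (r - 2 * e / 2 ^ k) := by
    intro k
    induction k with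
    | zero => exact hanti _ _ (by simp; linarith) h0
    | succ k ih =>
      have hd : (0:ℚ) < 2 * e / 2 ^ k := by
        apply div_pos <;> [linarith; positivity]
      have hk : 2 * e / 2 ^ (k + 1) = (2 * e / 2 ^ k) / 2 := by
        rw [pow_succ]; field_simp
      have h1 : P (max 0 (r - 2 * e / 2 ^ k)) := by
        rcases max_choice 0 (r - 2 * e / 2 ^ k) with h | h <;> rw [h] <;> assumption
      refine hanti _ _ ?_ (hstep _ (le_max_left _ _) (max_le (by linarith) (by linarith)) h1)
      have := le_max_right 0 (r - 2 * e / 2 ^ k)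
      rw [hk]
      exact le_min (by linarith) (by linarith)
  obtain ⟨k, hk⟩ := exists_pow_lt_of_lt_one (show 0 < (r - r') / (2 * e) by
    apply div_pos <;> linarith) (show (1/2 : ℚ) < 1 by norm_num)
  refine hanti _ _ ?_ (key k)
  rw [lt_div_iff₀ (by linarith)] at hk
  have : 2 * e / 2 ^ k = (1/2)^k * (2 * e) := by
    rw [div_pow, one_pow]; ring
  linarith

/-- `h` is a square up to an error of relative valuation at least `r`. -/
def DD {F : Type*} [Field F] (v : AddValuation F (WithTop ℚ)) (h : F[X]) (r : ℚ) : Prop :=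
  ∃ (x : ℚ) (q : F[X]), GEx v x h ∧ GV v (x + r) (h - q ^ 2)

lemma DD.mono {h : F[X]} {r s : ℚ} (H : DD v h r) (hs : s ≤ r) : DD v h s := by
  obtain ⟨x, q, hx, hG⟩ := H
  exact ⟨x, q, hx, hG.mono (by linarith)⟩

lemma DD.of_nonpos {h : F[X]} (h0 : h ≠ 0) {r : ℚ} (hr : r ≤ 0) : DD v h r := by
  obtain ⟨x, hx⟩ := gex_exists (v := v) h0
  refine ⟨x, 0, hx, ?_⟩
  have : h - 0 ^ 2 = h := by ring
  rw [this]
  exact hx.1.mono (by linarith)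

lemma DD.iff_normalized {h : F[X]} (hh : GEx v 0 h) {r : ℚ} :
    DD v h r ↔ ∃ q : F[X], GV v r (h - q ^ 2) := by
  constructor
  · rintro ⟨x, q, hx, hG⟩
    obtain rfl := hx.unique hh
    exact ⟨q, by simpa using hG⟩
  · rintro ⟨q, hG⟩
    exact ⟨0, q, hh, by simpa using hG⟩

lemma DD.scale [IsAlgClosed F] {h : F[X]} {r : ℚ} (H : DD v h r) {c : F} (hc : c ≠ 0) :
    DD v (C c * h) r := by
  obtain ⟨x, q, hx, hG⟩ := H
  obtain ⟨d, rfl⟩ := IsAlgClosed.exists_pow_nat_eq c (n := 2) two_pos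
  have hne : v (d ^ 2) ≠ ⊤ := by rwa [ne_eq, AddValuation.top_iff]
  obtain ⟨y, hy⟩ := WithTop.ne_top_iff_exists.1 hne
  refine ⟨y + x, C d * q, (GEx.C hy.symm).mul hx, ?_⟩
  have : C (d ^ 2) * h - (C d * q) ^ 2 = C (d ^ 2) * (h - q ^ 2) := by
    rw [C_pow]; ring
  rw [this]
  exact ((GEx.C hy.symm).1.mul hG).mono (by linarith)

lemma DD.scale_iff [IsAlgClosed F] {h : F[X]} {r : ℚ} {c : F} (hc : c ≠ 0) :
    DD v (C c * h) r ↔ DD v h r := by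
  refine ⟨fun H => ?_, fun H => H.scale hc⟩
  have := H.scale (inv_ne_zero hc)
  rwa [← mul_assoc, ← C_mul, inv_mul_cancel₀ hc, C_1, one_mul] at this

lemma DD.mul {h₁ h₂ : F[X]} {r : ℚ} (hr : 0 ≤ r) (H₁ : DD v h₁ r) (H₂ : DD v h₂ r) :
    DD v (h₁ * h₂) r := by
  obtain ⟨x, q₁, hx, hG₁⟩ := H₁
  obtain ⟨y, q₂, hy, hG₂⟩ := H₂
  refine ⟨x + y, q₁ * q₂, hx.mul hy, ?_⟩
  have : h₁ * h₂ - (q₁ * q₂) ^ 2 = h₁ * (h₂ - q₂ ^ 2) + h₂ * (h₁ - q₁ ^ 2)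
      - (h₁ - q₁ ^ 2) * (h₂ - q₂ ^ 2) := by ring
  rw [this]
  refine GV.sub (GV.add ?_ ?_) ?_
  · exact (hx.1.mul hG₂).mono (by linarith)
  · exact (hy.1.mul hG₁).mono (by linarith)
  · exact (hG₁.mul hG₂).mono (by linarith)

lemma DD.one {r : ℚ} : DD v (1 : F[X]) r := by
  refine ⟨0, 1, GEx.one, ?_⟩
  have : (1 : F[X]) - 1 ^ 2 = 0 := by ring
  rw [this]
  exact GV.zero

lemma DD.prod {ι : Type*} {s : Finset ι} {h : ι → F[X]} {r : ℚ} (hr : 0 ≤ r)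
    (H : ∀ i ∈ s, DD v (h i) r) : DD v (∏ i ∈ s, h i) r := by
  classical
  induction s using Finset.induction_on with
  | empty => simpa using DD.one
  | insert a s ha ih =>
    rw [Finset.prod_insert ha]
    exact DD.mul hr (H a (by simp)) (ih fun i hi => H i (by simp [hi]))

lemma DD.comp {h l l' : F[X]} {r : ℚ} (H : DD v h r) (hl : GV v 0 l) (hl' : GV v 0 l')
    (hinv : l.comp l' = X) : DD v (h.comp l) r := by
  obtain ⟨x, q, hx, hG⟩ := H
  have hback : (h.comp l).comp l' = h := by rw [comp_assoc, hinv, comp_X]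
  have hne : h.comp l ≠ 0 := by
    intro h0
    rw [h0, zero_comp] at hback
    exact hx.ne_zero hback.symm
  obtain ⟨y, hy⟩ := gex_exists (v := v) hne
  have h1 : x ≤ y := hy.le (hx.1.comp hl)
  have h2 : y ≤ x := by
    apply hx.le
    rw [← hback]
    exact hy.1.comp hl'
  obtain rfl := le_antisymm h1 h2
  refine ⟨x, q.comp l, hy, ?_⟩
  rw [← pow_comp, ← sub_comp]
  exact hG.comp hl

lemma normalize_exists (hsurj : ∀ b : ℚ, ∃ β : F, β ≠ 0 ∧ v β = (b : WithTop ℚ)) {h : F[X]}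
    (h0 : h ≠ 0) : ∃ c : F, c ≠ 0 ∧ GEx v 0 (C c * h) := by
  obtain ⟨x, hx⟩ := gex_exists (v := v) h0
  obtain ⟨c, hc, hcv⟩ := hsurj (-x)
  refine ⟨c, hc, ?_⟩
  simpa using (GEx.C hcv).mul hx

/-- Cancellation of a factor that is close to a square. -/
lemma mainA [IsAlgClosed F] (hsurj : ∀ b : ℚ, ∃ β : F, β ≠ 0 ∧ v β = (b : WithTop ℚ))
    {e : ℚ} (he : v 2 = (e : WithTop ℚ)) {h₁ h₂ : F[X]} (h₁0 : h₁ ≠ 0) (h₂0 : h₂ ≠ 0)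
    {r : ℚ} (hr : r ≤ 2 * e) (H : DD v (h₁ * h₂) r) (H₂ : DD v h₂ r) :
    ∀ r' < r, DD v h₁ r' := by
  by_cases hpos : e ≤ 0
  · intro r' hr'
    exact DD.of_nonpos h₁0 (by linarith)
  push Not at hpos
  obtain ⟨c, hc, hcn⟩ := normalize_exists hsurj h₁0
  obtain ⟨d, hd, hdn⟩ := normalize_exists hsurj h₂0
  have H' : DD v ((C c * h₁) * (C d * h₂)) r := by
    have := H.scale (mul_ne_zero hc hd)
    convert this using 1
    rw [C_mul]; ring
  replace H₂ := H₂.scale hd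
  suffices ∀ r' < r, DD v (C c * h₁) r' from fun r' hr' => (DD.scale_iff hc).1 (this r' hr')
  have hne := hcn.ne_zero
  generalize C c * h₁ = g₁ at *
  generalize C d * h₂ = g₂ at *
  have hprod := hcn.mul hdn
  rw [add_zero] at hprod
  obtain ⟨q₀, hq₀⟩ := (DD.iff_normalized hprod).1 H'
  obtain ⟨q₂, hq₂⟩ := (DD.iff_normalized hdn).1 H₂
  apply iterate_aux (e := e) (fun x y hxy h => h.mono hxy) (DD.of_nonpos hne le_rfl) hr
  intro s hs0 hsr Hs
  obtain ⟨q₁, hq₁⟩ := (DD.iff_normalized hcn).1 Hs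
  have hcore := core he hs0 hsr hr hcn.1 hdn.1 hq₀ hq₁ (hq₂.mono hsr)
  have h1 : GV v (min r (e + s / 2)) (g₂ * derivative (g₁ - q₁ ^ 2)) := by
    have h2 : GV v (min r (e + s / 2)) (g₁ * derivative (g₂ - q₂ ^ 2)) :=
      (hcn.1.mul hq₂.derivative).mono (by simp)
    simpa using hcore.sub h2
  exact (DD.iff_normalized hcn).2
    (improve he hpos hs0 (min_le_right _ _) hcn.1 hq₁ (GV.cancel hdn h1))

lemma GEx.of_small {ε : ℚ} (hε : 0 < ε) {p g : F[X]} (hg : GEx v 0 g) (hp : GV v ε (p - g)) :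
    GEx v 0 p := by
  have h1 : p = g + (p - g) := by ring
  refine ⟨?_, ?_⟩
  · rw [h1]; exact hg.1.add (hp.mono hε.le)
  · obtain ⟨i, hi⟩ := hg.2
    refine ⟨i, ?_⟩
    rw [h1, coeff_add, AddValuation.map_add_eq_of_lt_left, hi]
    rw [hi]
    exact lt_of_lt_of_le (by exact_mod_cast hε) (hp i)

/-- The separated case. -/
lemma mainB [IsAlgClosed F] {e : ℚ} (he : v 2 = (e : WithTop ℚ)) {n : ℕ} {P Q : F[X]} {ε : ℚ}
    (hε : 0 < ε) (hP : GV v ε (P - 1)) (hQ : GV v ε (Q - X ^ n)) (hdeg : Q.natDegree ≤ n)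
    {r : ℚ} (hr : r ≤ 2 * e) (H : DD v (P * Q) r) :
    ∀ r' < r, DD v P r' ∧ DD v Q r' := by
  have hPn : GEx v 0 P := GEx.one.of_small hε hP
  have hQn : GEx v 0 Q := by
    refine GEx.of_small hε (g := X ^ n) ⟨GV.X.pow n, n, by simp⟩ hQ
  by_cases hpos : e ≤ 0
  · intro r' hr'
    exact ⟨DD.of_nonpos hPn.ne_zero (by linarith), DD.of_nonpos hQn.ne_zero (by linarith)⟩
  push Not at hpos
  have hprod := hPn.mul hQn
  rw [add_zero] at hprod
  obtain ⟨q₀, hq₀⟩ := (DD.iff_normalized hprod).1 H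
  apply iterate_aux (P := fun r' => DD v P r' ∧ DD v Q r') (e := e)
    (fun x y hxy h => ⟨h.1.mono hxy, h.2.mono hxy⟩)
    ⟨DD.of_nonpos hPn.ne_zero le_rfl, DD.of_nonpos hQn.ne_zero le_rfl⟩ hr
  rintro s hs0 hsr ⟨Hs₁, Hs₂⟩
  obtain ⟨q₁, hq₁⟩ := (DD.iff_normalized hPn).1 Hs₁
  obtain ⟨q₂', hq₂'⟩ := (DD.iff_normalized hQn).1 Hs₂
  obtain ⟨q₂, hd₂, hq₂⟩ := degree_reduce he hs0 (hsr.trans hr) hQn.1 _ q₂' le_rfl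
    (hq₂'.mono (zero_add s).le)
  rw [zero_add] at hq₂
  have hcore := core he hs0 hsr hr hPn.1 hQn.1 hq₀ hq₁ hq₂
  have hBdeg : ∀ j, n ≤ j → (derivative (Q - q₂ ^ 2)).coeff j = 0 := by
    intro j hj
    rw [coeff_derivative, coeff_eq_zero_of_natDegree_lt, zero_mul]
    have h1 := natDegree_sub_le Q (q₂ ^ 2)
    have h2 : (q₂ ^ 2).natDegree ≤ 2 * q₂.natDegree := natDegree_pow_le
    have h3 := h1.trans (max_le hdeg (h2.trans (hd₂.trans hdeg)))
    omega
  have key : GV v (min r (e + s / 2)) (derivative (P - q₁ ^ 2)) ∧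
      GV v (min r (e + s / 2)) (derivative (Q - q₂ ^ 2)) := by
    generalize derivative (P - q₁ ^ 2) = A at *
    generalize derivative (Q - q₂ ^ 2) = B at *
    generalize min r (e + s / 2) = s' at *
    have hcA : ∀ j, (X ^ n * A + B).coeff (j + n) = A.coeff j := by
      intro j
      rw [coeff_add, coeff_X_pow_mul, hBdeg _ (by omega), add_zero]
    have hcB : ∀ j, j < n → (X ^ n * A + B).coeff j = B.coeff j := by
      intro j hj
      rw [coeff_add, coeff_X_pow_mul', if_neg (by omega), zero_add]
    have hAB : ∀ x, GV v x (X ^ n * A + B) → GV v x A ∧ GV v x B := by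
      intro x hx
      refine ⟨fun j => ?_, fun j => ?_⟩
      · rw [← hcA]; exact hx _
      · by_cases hj : j < n
        · rw [← hcB j hj]; exact hx _
        · rw [hBdeg j (by omega)]; simp
    apply hAB
    by_cases h0 : X ^ n * A + B = 0
    · rw [h0]; exact GV.zero
    obtain ⟨x, hx⟩ := gex_exists (v := v) h0
    obtain ⟨hA, hB⟩ := hAB x hx.1
    have hid : X ^ n * A + B = (Q * A + P * B) - (Q - X ^ n) * A - (P - 1) * B := by ring
    have h2 : GV v (min s' (x + ε)) (X ^ n * A + B) := by
      rw [hid]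
      refine GV.sub (GV.sub ?_ ?_) ?_
      · exact hcore.mono (min_le_left _ _)
      · exact (hQ.mul hA).mono ((min_le_right _ _).trans (by linarith))
      · exact (hP.mul hB).mono ((min_le_right _ _).trans (by linarith))
    rcases min_le_iff.1 (hx.le h2) with h | h
    · exact hx.1.mono h
    · linarith
  exact ⟨(DD.iff_normalized hPn).2
      (improve he hpos hs0 (min_le_right _ _) hPn.1 hq₁ key.1),
    (DD.iff_normalized hQn).2
      (improve he hpos hs0 (min_le_right _ _) hQn.1 hq₂ key.2)⟩

/-- The transformed polynomial. -/
noncomputable def HP (S : Multiset F) (α β : F) : F[X] := (rootsPoly S).comp (C β * X + C α)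

lemma HP_eq (S : Multiset F) (α β : F) :
    HP S α β = (S.map fun a => C β * X + C (α - a)).prod := by
  unfold HP rootsPoly
  rw [multiset_prod_comp, Multiset.map_map]
  congr 1
  apply Multiset.map_congr rfl
  intro a _
  simp only [Function.comp, sub_comp, X_comp, C_comp, C_sub]
  ring

lemma HP_add (S T : Multiset F) (α β : F) : HP (S + T) α β = HP S α β * HP T α β := by
  simp [HP_eq]

lemma HP_zero (α β : F) : HP (0 : Multiset F) α β = 1 := by
  simp [HP_eq]

lemma HP_cons (a : F) (S : Multiset F) (α β : F) :
    HP (a ::ₘ S) α β = (C β * X + C (α - a)) * HP S α β := by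
  simp [HP_eq]

lemma HP_sum {ι : Type*} (s : Finset ι) (S : ι → Multiset F) (α β : F) :
    HP (∑ i ∈ s, S i) α β = ∏ i ∈ s, HP (S i) α β := by
  classical
  induction s using Finset.induction_on with
  | empty => simp [HP_zero]
  | insert a s ha ih => rw [Finset.sum_insert ha, Finset.prod_insert ha, HP_add, ih]

lemma HP_ne_zero (S : Multiset F) (α : F) {β : F} (hβ : β ≠ 0) : HP S α β ≠ 0 := by
  induction S using Multiset.induction_on with
  | empty => simp [HP_zero]
  | cons a S ih =>
    rw [HP_cons]
    refine mul_ne_zero ?_ ih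
    intro h
    have := congrArg (fun p => coeff p 1) h
    simp at this
    exact hβ this

lemma DD.change {S : Multiset F} {α β α' β' : F} {b r : ℚ} (hβ : β ≠ 0) (hβ' : β' ≠ 0)
    (hb : v β = (b : WithTop ℚ)) (hb' : v β' = (b : WithTop ℚ))
    (hα : (b : WithTop ℚ) ≤ v (α' - α)) (H : DD v (HP S α β) r) : DD v (HP S α' β') r := by
  have hdiv : ∀ (x y : F), y ≠ 0 → v y = (b : WithTop ℚ) → (b : WithTop ℚ) ≤ v x →
      ((0 : ℚ) : WithTop ℚ) ≤ v (x / y) := by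
    intro x y hy hyv hx
    by_contra hcon
    push Not at hcon
    have h1 : v x = v (x / y) + v y := by rw [← v.map_mul, div_mul_cancel₀ _ hy]
    rw [h1, hyv] at hx
    have h2 : v (x / y) + (b : WithTop ℚ) < ((0 : ℚ) : WithTop ℚ) + b :=
      WithTop.add_lt_add_right WithTop.coe_ne_top hcon
    rw [WithTop.coe_zero, zero_add] at h2
    exact absurd hx (not_le.2 h2)
  have h1 : HP S α' β' = (HP S α β).comp (C (β' / β) * X + C ((α' - α) / β)) := by
    unfold HP
    rw [comp_assoc]
    congr 1
    simp only [add_comp, mul_comp, C_comp, X_comp]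
    rw [mul_add, ← mul_assoc, ← C_mul, ← C_mul, mul_div_cancel₀ _ hβ, mul_div_cancel₀ _ hβ, C_sub]
    ring
  rw [h1]
  apply H.comp (l' := C (β / β') * X + C ((α - α') / β'))
  · exact GV.add (by simpa using (GV.C (hdiv _ _ hβ hb hb'.ge)).mul GV.X)
      (GV.C (hdiv _ _ hβ hb hα))
  · exact GV.add (by simpa using (GV.C (hdiv _ _ hβ' hb' hb.ge)).mul GV.X)
      (GV.C (hdiv _ _ hβ' hb' (by rwa [AddValuation.map_sub_swap])))
  · simp only [add_comp, mul_comp, C_comp, X_comp]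
    rw [mul_add, ← mul_assoc, ← C_mul, ← C_mul, add_assoc, ← C_add]
    have e1 : β' / β * (β / β') = 1 := by field_simp
    have e2 : β' / β * ((α - α') / β') + (α' - α) / β = 0 := by field_simp; ring
    rw [e1, e2]
    simp

lemma tval_spec {e : ℚ} (he : v 2 = (e : WithTop ℚ)) (he0 : 0 ≤ e) {S : Multiset F} {α : F}
    {b t : ℚ} (H : TVal v S α b t) {β : F} (hβ : β ≠ 0) (hb : v β = (b : WithTop ℚ)) :
    0 ≤ t ∧ t ≤ 2 * e ∧ (∀ r < t, DD v (HP S α β) r) ∧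
      (∀ r ≤ 2 * e, DD v (HP S α β) r → r ≤ t) := by
  obtain ⟨β₁, hβ₁, hb₁, hlub⟩ := H
  change IsLUB {u : WithTop ℚ | ∃ q ρ : F[X], IsPSD (HP S α β₁) q ρ ∧
    u = min (gaussVal v (HP S α β₁) + (v 2 + v 2)) (gaussVal v ρ)}
    (gaussVal v (HP S α β₁) + (t : WithTop ℚ)) at hlub
  have hne := HP_ne_zero S α hβ₁
  have hchg : ∀ r, DD v (HP S α β₁) r ↔ DD v (HP S α β) r := fun r =>
    ⟨DD.change hβ₁ hβ hb₁ hb (by simp), DD.change hβ hβ₁ hb hb₁ (by simp)⟩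
  simp only [← hchg]
  generalize HP S α β₁ = h at *
  obtain ⟨x, hx⟩ := gex_exists (v := v) hne
  rw [hx.gaussVal, he, ← WithTop.coe_add, ← WithTop.coe_add, ← WithTop.coe_add] at hlub
  have ht0 : 0 ≤ t := by
    have := hlub.1 ⟨0, h, ⟨by ring, by simp⟩, rfl⟩
    rw [hx.gaussVal, ← WithTop.coe_min] at this
    have := WithTop.coe_le_coe.1 this
    rcases min_le_iff.1 this with h | h <;> linarith
  refine ⟨ht0, ?_, ?_, ?_⟩
  · have : ((x + t : ℚ) : WithTop ℚ) ≤ ((x + (e + e) : ℚ) : WithTop ℚ) := by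
      apply hlub.2
      rintro u ⟨q, ρ, _, rfl⟩
      exact min_le_left _ _
    have := WithTop.coe_le_coe.1 this
    linarith
  · intro r hr
    have h1 : ((x + r : ℚ) : WithTop ℚ) < ((x + t : ℚ) : WithTop ℚ) := by
      exact_mod_cast (by linarith : x + r < x + t)
    obtain ⟨u, ⟨q, ρ, hpsd, rfl⟩, hu, _⟩ := hlub.exists_between h1
    have h2 : ((x + r : ℚ) : WithTop ℚ) ≤ gaussVal v ρ := hu.le.trans (min_le_right _ _)
    refine ⟨x, q, hx, ?_⟩
    have h3 : h - q ^ 2 = ρ := by rw [hpsd.1]; ring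
    rw [h3]
    exact gaussVal_le_iff.1 h2
  · rintro r hr ⟨x', q, hx', hG⟩
    obtain rfl := hx'.unique hx
    by_cases hr0 : r ≤ 0
    · linarith
    push Not at hr0
    obtain ⟨q', hd, hG'⟩ := degree_reduce he hr0.le hr hx.1 _ q le_rfl hG
    have h1 := hlub.1 ⟨q', h - q' ^ 2, ⟨by ring, by omega⟩, rfl⟩
    have h2 : ((x' + r : ℚ) : WithTop ℚ) ≤ ((x' + t : ℚ) : WithTop ℚ) := by
      refine le_trans (le_min ?_ (gaussVal_le_iff.2 hG')) h1
      exact_mod_cast (by linarith : x' + r ≤ x' + (e + e))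
    have := WithTop.coe_le_coe.1 h2
    linarith

lemma exists_pos_le {x : WithTop ℚ} (hx : 0 < x) : ∃ ε : ℚ, 0 < ε ∧ (ε : WithTop ℚ) ≤ x := by
  induction x using WithTop.recTopCoe with
  | top => exact ⟨1, one_pos, le_top⟩
  | coe q => exact ⟨q, by exact_mod_cast hx, le_rfl⟩

lemma v_div_pos {x y : F} (hy : y ≠ 0) (h : v y < v x) : 0 < v (x / y) := by
  by_contra hcon
  push Not at hcon
  have h1 : v x = v (x / y) + v y := by rw [← v.map_mul, div_mul_cancel₀ _ hy]
  have h2 : v (x / y) + v y ≤ 0 + v y := add_le_add hcon le_rfl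
  rw [zero_add, ← h1] at h2
  exact absurd h (not_lt.2 h2)

lemma outer_form {S : Multiset F} {α β : F} (h : ∀ a ∈ S, v (a - α) < v β) :
    ∃ (c : F) (P : F[X]) (ε : ℚ), c ≠ 0 ∧ 0 < ε ∧ HP S α β = C c * P ∧ GV v ε (P - 1) := by
  induction S using Multiset.induction_on with
  | empty => exact ⟨1, 1, 1, one_ne_zero, one_pos, by simp [HP_zero], by simpa using GV.zero⟩
  | cons a S ih =>
    obtain ⟨c, P, ε, hc, hε, hP, hG⟩ := ih fun x hx => h x (by simp [hx])
    have ha := h a (by simp)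
    rw [AddValuation.map_sub_swap] at ha
    have hne : α - a ≠ 0 := by
      intro h0
      rw [h0] at ha
      simp at ha
    obtain ⟨δ, hδ, hδv⟩ := exists_pos_le (v_div_pos hne ha)
    refine ⟨(α - a) * c, (C (β / (α - a)) * X + 1) * P, min δ ε, mul_ne_zero hne hc,
      lt_min hδ hε, ?_, ?_⟩
    · have : C β * X + C (α - a) = C (α - a) * (C (β / (α - a)) * X + 1) := by
        rw [mul_add, ← mul_assoc, ← C_mul, mul_div_cancel₀ _ hne, mul_one]
      rw [HP_cons, hP, this, C_mul]
      ring
    · have hX : GV v δ (C (β / (α - a)) * X) := by simpa using (GV.C hδv).mul GV.X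
      have : (C (β / (α - a)) * X + 1) * P - 1 =
          (C (β / (α - a)) * X) * (P - 1) + C (β / (α - a)) * X + (P - 1) := by ring
      rw [this]
      refine GV.add (GV.add ?_ ?_) ?_
      · exact (hX.mul hG).mono ((min_le_left _ _).trans (by linarith))
      · exact hX.mono (min_le_left _ _)
      · exact hG.mono (min_le_right _ _)

lemma inner_form {S : Multiset F} {α β : F} (hβ : β ≠ 0) (h : ∀ a ∈ S, v β < v (a - α)) :
    ∃ (c : F) (Q : F[X]) (ε : ℚ), c ≠ 0 ∧ 0 < ε ∧ HP S α β = C c * Q ∧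
      GV v ε (Q - X ^ (Multiset.card S)) ∧ Q.natDegree ≤ Multiset.card S := by
  induction S using Multiset.induction_on with
  | empty => exact ⟨1, 1, 1, one_ne_zero, one_pos, by simp [HP_zero], by simpa using GV.zero,
      by simp⟩
  | cons a S ih =>
    obtain ⟨c, Q, ε, hc, hε, hQ, hG, hd⟩ := ih fun x hx => h x (by simp [hx])
    have ha := h a (by simp)
    rw [AddValuation.map_sub_swap] at ha
    obtain ⟨δ, hδ, hδv⟩ := exists_pos_le (v_div_pos hβ ha)
    refine ⟨β * c, (X + C ((α - a) / β)) * Q, min δ ε, mul_ne_zero hβ hc,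
      lt_min hδ hε, ?_, ?_, ?_⟩
    · have : C β * X + C (α - a) = C β * (X + C ((α - a) / β)) := by
        rw [mul_add, ← C_mul, mul_div_cancel₀ _ hβ]
      rw [HP_cons, hQ, this, C_mul]
      ring
    · have hC : GV v δ (C ((α - a) / β)) := GV.C hδv
      rw [Multiset.card_cons]
      have : (X + C ((α - a) / β)) * Q - X ^ (Multiset.card S + 1) =
          X * (Q - X ^ (Multiset.card S)) + C ((α - a) / β) * (Q - X ^ (Multiset.card S))
            + C ((α - a) / β) * X ^ (Multiset.card S) := by ring
      rw [this]
      refine GV.add (GV.add ?_ ?_) ?_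
      · exact (GV.X.mul hG).mono ((min_le_right _ _).trans (by linarith))
      · exact (hC.mul hG).mono ((min_le_left _ _).trans (by linarith))
      · exact (hC.mul (GV.X.pow _)).mono ((min_le_left _ _).trans (by linarith))
    · rw [Multiset.card_cons]
      have h1 := natDegree_mul_le (p := X + C ((α - a) / β)) (q := Q)
      have h2 := natDegree_X_add_C ((α - a) / β)
      omega

end Helpers

/-- Splitting a multiset `S = S₁ + ⋯ + S_N`:
(a) `𝔱^S(α,b) ≥ min 𝔱^{Sᵢ}(α,b)`;
(b) equality holds (i) when the minimum is attained at a unique index, and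
(ii) when `N = 2`, every `a ∈ S₁` has `v (a − α) < b`, and `S₂` is contained in a
strictly smaller disc `D_{α',b'} ⊆ D_{α,b}` with `b' > b`. -/
theorem stmt10 {Kbar : Type*} [Field Kbar] [IsAlgClosed Kbar]
    (v : AddValuation Kbar (WithTop ℚ)) (hchar : (2 : Kbar) ≠ 0)
    (hres : ResidueAlgClosed v)
    (hsurj : ∀ b : ℚ, ∃ β : Kbar, β ≠ 0 ∧ v β = (b : WithTop ℚ))
    (α : Kbar) (b : ℚ) :
    (∀ N : ℕ, 0 < N → ∀ Ss : Fin N → Multiset Kbar, ∀ t : ℚ, ∀ ts : Fin N → ℚ,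
      TVal v (∑ i, Ss i) α b t → (∀ i, TVal v (Ss i) α b (ts i)) →
      (∃ i, ts i ≤ t) ∧
        ∀ i₀ : Fin N, (∀ i, i ≠ i₀ → ts i₀ < ts i) → t = ts i₀) ∧
    (∀ S₁ S₂ : Multiset Kbar, ∀ t t₁ t₂ : ℚ,
      TVal v (S₁ + S₂) α b t → TVal v S₁ α b t₁ → TVal v S₂ α b t₂ →
      (∀ a ∈ S₁, v (a - α) < (b : WithTop ℚ)) →
      (∃ α' : Kbar, (b : WithTop ℚ) ≤ v (α' - α) ∧
        ∃ b' : ℚ, b < b' ∧ ∀ a ∈ S₂, (b' : WithTop ℚ) ≤ v (a - α')) →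
      t = min t₁ t₂) := by
  obtain ⟨e, he⟩ := WithTop.ne_top_iff_exists.1
    (show v 2 ≠ ⊤ by rwa [ne_eq, AddValuation.top_iff])
  replace he := he.symm
  have he0 : 0 ≤ e := by
    have := v_nat_nonneg (v := v) 2
    push_cast at this
    rw [he] at this
    exact_mod_cast this
  obtain ⟨β, hβ, hb⟩ := hsurj b
  constructor
  · intro N hN Ss t ts hT hTs
    obtain ⟨ht0, ht2, hlt, hle⟩ := tval_spec he he0 hT hβ hb
    have hs := fun i => tval_spec he he0 (hTs i) hβ hb
    have hmin : ∃ i, ts i ≤ t := by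
      by_contra hcon
      push Not at hcon
      obtain ⟨r, hr1, hr2⟩ : ∃ r, t < r ∧ ∀ i, r < ts i := by
        have : Nonempty (Fin N) := ⟨⟨0, hN⟩⟩
        obtain ⟨j, hj⟩ := Finite.exists_min ts
        obtain ⟨r, h1, h2⟩ := exists_between (hcon j)
        exact ⟨r, h1, fun i => h2.trans_le (hj i)⟩
      have hD : DD v (HP (∑ i, Ss i) α β) r := by
        rw [HP_sum]
        exact DD.prod (by linarith) fun i _ => (hs i).2.2.1 r (hr2 i)
      have := hle r ((hr2 ⟨0, hN⟩).le.trans (hs _).2.1) hD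
      linarith
    refine ⟨hmin, fun i₀ hi₀ => ?_⟩
    apply le_antisymm
    · by_contra hcon
      push Not at hcon
      obtain ⟨r, hr1, hr2, hr3⟩ : ∃ r, ts i₀ < r ∧ r < t ∧ ∀ i, i ≠ i₀ → r < ts i := by
        have : Nonempty (Fin N) := ⟨⟨0, hN⟩⟩
        obtain ⟨j, hj⟩ := Finite.exists_min (fun i => if i = i₀ then t else ts i)
        have : ts i₀ < if j = i₀ then t else ts j := by
          split_ifs with h
          · exact hcon
          · exact hi₀ j h
        obtain ⟨r, h1, h2⟩ := exists_between this
        refine ⟨r, h1, ?_, fun i hi => ?_⟩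
        · simpa using h2.trans_le (hj i₀)
        · simpa [hi] using h2.trans_le (hj i)
      have hprod : HP (∑ i, Ss i) α β =
          HP (Ss i₀) α β * ∏ i ∈ Finset.univ.erase i₀, HP (Ss i) α β := by
        rw [HP_sum]
        exact (Finset.mul_prod_erase Finset.univ (fun i => HP (Ss i) α β) (Finset.mem_univ i₀)).symm
      have hD := hlt r hr2
      rw [hprod] at hD
      obtain ⟨r', h1, h2⟩ := exists_between hr1
      have hD1 := mainA hsurj he (HP_ne_zero _ α hβ)
        (Finset.prod_ne_zero_iff.2 fun i _ => HP_ne_zero _ α hβ) (hr2.le.trans ht2) hD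
        (DD.prod (by linarith [(hs i₀).1]) fun i hi =>
          (hs i).2.2.1 r (hr3 i (Finset.ne_of_mem_erase hi))) r' h2
      have := (hs i₀).2.2.2 r' (by linarith) hD1
      linarith
    · obtain ⟨i, hi⟩ := hmin
      by_cases h : i = i₀
      · rwa [h] at hi
      · exact (hi₀ i h).le.trans hi
  · intro S₁ S₂ t t₁ t₂ hT hT₁ hT₂ hS₁ hS₂
    obtain ⟨ht0, ht2, hlt, hle⟩ := tval_spec he he0 hT hβ hb
    obtain ⟨ht0₁, ht2₁, hlt₁, hle₁⟩ := tval_spec he he0 hT₁ hβ hb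
    obtain ⟨ht0₂, ht2₂, hlt₂, hle₂⟩ := tval_spec he he0 hT₂ hβ hb
    obtain ⟨α', hα', b', hbb', hS₂⟩ := hS₂
    apply le_antisymm
    · apply le_of_forall_lt
      intro r'' hr''
      obtain ⟨r', hr', hr't⟩ := exists_between hr''
      obtain ⟨r, hr, hrt⟩ := exists_between hr't
      obtain ⟨c, P, ε, hc, hε, hP, hPG⟩ := outer_form (v := v) (S := S₁) (α := α') (β := β) (by
        intro a ha
        have h1 := hS₁ a ha
        have h2 : a - α' = (a - α) + -(α' - α) := by ring
        rw [h2, AddValuation.map_add_eq_of_lt_left, hb]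
        · exact h1
        · rw [AddValuation.map_neg]; exact h1.trans_le hα')
      obtain ⟨d, Q, ε', hd, hε', hQ, hQG, hQd⟩ := inner_form (v := v) (S := S₂) (α := α') hβ (by
        intro a ha
        rw [hb]
        exact lt_of_lt_of_le (by exact_mod_cast hbb') (hS₂ a ha))
      have hD : DD v (HP (S₁ + S₂) α' β) r := (hlt r hrt).change hβ hβ hb hb hα'
      have hid : HP (S₁ + S₂) α' β = C (c * d) * (P * Q) := by
        rw [HP_add, hP, hQ, C_mul]; ring
      rw [hid, DD.scale_iff (mul_ne_zero hc hd)] at hD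
      obtain ⟨hD₁, hD₂⟩ := mainB he (lt_min hε hε') (hPG.mono (min_le_left _ _))
        (hQG.mono (min_le_right _ _)) hQd (hrt.le.trans ht2) hD r' hr
      have hα'' : (b : WithTop ℚ) ≤ v (α - α') := by rwa [AddValuation.map_sub_swap]
      replace hD₁ := hD₁.scale hc
      replace hD₂ := hD₂.scale hd
      rw [← hP] at hD₁
      rw [← hQ] at hD₂
      have h1 := hle₁ r' (by linarith) (hD₁.change hβ hβ hb hb hα'')
      have h2 := hle₂ r' (by linarith) (hD₂.change hβ hβ hb hb hα'')
      exact lt_min (by linarith) (by linarith)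
    · by_contra hcon
      push Not at hcon
      obtain ⟨r, hr1, hr2⟩ := exists_between hcon
      obtain ⟨h1, h2⟩ := lt_min_iff.1 hr2
      have hD : DD v (HP (S₁ + S₂) α β) r := by
        rw [HP_add]
        exact DD.mul (by linarith) (hlt₁ r h1) (hlt₂ r h2)
      have := hle r (by linarith) hD
      linarith
end
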